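/- arXiv:2410.18259 — 2 statements merged into one kernel-verified Lean document; each statement's English description precedes it below -/
import Mathlib

section
/- There exists a constant C > 0 such that for all real x ≥ 16, |Σ_{n ≤ x} μ(n) ω(n) / n| ≤ C · √(log log x) / √(log x). Consequently, the series Σ_{n=1}^∞ μ(n) ω(n) / n converges and equals 0, i.e., the partial sums Σ_{n ≤ x} μ(n) ω(n)/n tend to 0 as x → ∞. -/
open Finset ArithmeticFunction Real Filter

/-!
Multiplication by `Ω` is a derivation of Dirichlet convolution and `Ω = 1_PP * 1`, where `1_PP` is
the indicator function of the prime powers. Hence `μ ω = μ Ω = -(1_PP * μ)`, and the sum in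
question is `-∑_{q ≤ x} m(x / q) / q` over prime powers `q`, where `m(x) = ∑_{n ≤ x} μ(n) / n`.

Up to sign, the Mellin transform of `m(x) log x` is the derivative of `1 / ((s - 1) ζ(s))`. The
classical estimates `ζ ≪ log |t|`, `ζ' ≪ (log |t|)²`, `1 / ζ ≪ (log |t|)⁷` to the right of
`Re s = 1` make it square integrable on vertical lines, uniformly up to that line, so Plancherel
bounds `m(x) log x` in `L²(dx / x)`. Since `m` varies slowly, this turns into the pointwise bound
`m(x) ≪ (log x)^(-2/3)`. By Chebyshev, the prime powers in `[2 ^ j, 2 ^ (j + 1))` have reciprocal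
sum `≪ 1 / (j + 1)`, so summing over dyadic blocks gives
`≪ (log log x) (log x)^(-2/3) ≪ √(log log x) / √(log x)`.
-/

namespace MoebiusOmega

open scoped Topology

section SumVersusPrimitive

variable {E : Type*} [NormedAddCommGroup E] [NormedSpace ℝ E]
  {f f' Φ : ℝ → E} {ψ ψ' : ℝ → ℝ} {a : ℝ}

theorem norm_sub_le_sub_of_norm_deriv_le (hf : ∀ x, a ≤ x → HasDerivAt f (f' x) x)
    (hψ : ∀ x, a ≤ x → HasDerivAt ψ (ψ' x) x) (hle : ∀ x, a ≤ x → ‖f' x‖ ≤ ψ' x) {x y : ℝ}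
    (hax : a ≤ x) (hxy : x ≤ y) : ‖f y - f x‖ ≤ ψ y - ψ x := by
  have hderiv : ∀ z ∈ Set.Icc x y, HasDerivAt (fun z ↦ f z - f x) (f' z) z :=
    fun z hz ↦ (hf z (hax.trans hz.1)).sub_const _
  have hderivψ : ∀ z ∈ Set.Icc x y, HasDerivAt (fun z ↦ ψ z - ψ x) (ψ' z) z :=
    fun z hz ↦ (hψ z (hax.trans hz.1)).sub_const _
  exact image_norm_le_of_norm_deriv_right_le_deriv_boundary'
    (fun z hz ↦ (hderiv z hz).continuousAt.continuousWithinAt)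
    (fun z hz ↦ (hderiv z (Set.Ico_subset_Icc_self hz)).hasDerivWithinAt) (by simp)
    (fun z hz ↦ (hderivψ z hz).continuousAt.continuousWithinAt)
    (fun z hz ↦ (hderivψ z (Set.Ico_subset_Icc_self hz)).hasDerivWithinAt)
    (fun z hz ↦ hle z (hax.trans hz.1)) (Set.right_mem_Icc.2 hxy)

theorem norm_sub_primitive_sub_le (hΦ : ∀ x, a ≤ x → HasDerivAt Φ (f x) x)
    (hf : ∀ x, a ≤ x → HasDerivAt f (f' x) x) (hψ : ∀ x, a ≤ x → HasDerivAt ψ (ψ' x) x)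
    (hle : ∀ x, a ≤ x → ‖f' x‖ ≤ ψ' x) {x : ℝ} (hx : a ≤ x) :
    ‖f (x + 1) - (Φ (x + 1) - Φ x)‖ ≤ ψ (x + 1) - ψ x := by
  have hderiv : ∀ z ∈ Set.Icc x (x + 1),
      HasDerivWithinAt (fun z ↦ z • f (x + 1) - Φ z) (f (x + 1) - f z) (Set.Icc x (x + 1)) z :=
    fun z hz ↦ by
      simpa only [one_smul, id] using
        (((hasDerivAt_id z).smul_const _).fun_sub (hΦ z (hx.trans hz.1))).hasDerivWithinAt
  have hbound : ∀ z ∈ Set.Ico x (x + 1), ‖f (x + 1) - f z‖ ≤ ψ (x + 1) - ψ x := fun z hz ↦ by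
    have hright := norm_sub_le_sub_of_norm_deriv_le hf hψ hle (hx.trans hz.1) hz.2.le
    have hleft := norm_sub_le_sub_of_norm_deriv_le hf hψ hle hx hz.1
    linarith [norm_nonneg (f z - f x)]
  have h := norm_image_sub_le_of_norm_deriv_le_segment' hderiv hbound (x + 1) (by simp)
  have hrw : (x + 1) • f (x + 1) - Φ (x + 1) - (x • f (x + 1) - Φ x) =
      f (x + 1) - (Φ (x + 1) - Φ x) := by
    rw [add_smul, one_smul]; abel
  simpa [hrw] using h

theorem norm_sum_sub_primitive_sub_le {N : ℕ}
    (hΦ : ∀ x, (N : ℝ) ≤ x → HasDerivAt Φ (f x) x) (hf : ∀ x, (N : ℝ) ≤ x → HasDerivAt f (f' x) x)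
    (hψ : ∀ x, (N : ℝ) ≤ x → HasDerivAt ψ (ψ' x) x) (hle : ∀ x, (N : ℝ) ≤ x → ‖f' x‖ ≤ ψ' x)
    {M : ℕ} (hM : N ≤ M) :
    ‖∑ n ∈ Ico (N + 1) (M + 1), f n - (Φ M - Φ N)‖ ≤ ψ M - ψ N := by
  induction M, hM using Nat.le_induction with
  | base => simp
  | succ M hM ih =>
    have hstep := norm_sub_primitive_sub_le hΦ hf hψ hle (x := M) (mod_cast hM)
    rw [sum_Ico_succ_top (by lia)]
    push_cast
    calc _ = ‖(f (M + 1) - (Φ (M + 1) - Φ M))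
            + (∑ n ∈ Ico (N + 1) (M + 1), f n - (Φ M - Φ N))‖ := by
          congr 1; abel
      _ ≤ _ := norm_add_le_of_le hstep ih
      _ = _ := by ring

theorem norm_hasSum_sub_sum_add_primitive_le {N : ℕ} {S : E}
    (hΦ : ∀ x, (N : ℝ) ≤ x → HasDerivAt Φ (f x) x) (hf : ∀ x, (N : ℝ) ≤ x → HasDerivAt f (f' x) x)
    (hψ : ∀ x, (N : ℝ) ≤ x → HasDerivAt ψ (ψ' x) x) (hle : ∀ x, (N : ℝ) ≤ x → ‖f' x‖ ≤ ψ' x)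
    (hΦ0 : Tendsto Φ atTop (𝓝 0)) (hψ0 : ∀ x, (N : ℝ) ≤ x → ψ x ≤ 0)
    (hS : HasSum (fun n : ℕ ↦ f n) S) :
    ‖S - ∑ n ∈ range (N + 1), f n + Φ N‖ ≤ -ψ N := by
  have hlim : Tendsto (fun M : ℕ ↦ ∑ n ∈ range (M + 1), f n - ∑ n ∈ range (N + 1), f n
      - (Φ M - Φ N)) atTop (𝓝 (S - ∑ n ∈ range (N + 1), f n - (0 - Φ N))) :=
    ((hS.tendsto_sum_nat.comp (tendsto_add_atTop_nat 1)).sub_const _).sub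
      ((hΦ0.comp tendsto_natCast_atTop_atTop).sub_const _)
  rw [zero_sub, sub_neg_eq_add] at hlim
  refine le_of_tendsto hlim.norm ?_
  filter_upwards [eventually_ge_atTop N] with M hM
  rw [← sum_Ico_eq_sub _ (by lia)]
  have hsum := norm_sum_sub_primitive_sub_le hΦ hf hψ hle hM
  linarith [hψ0 M (mod_cast hM)]

end SumVersusPrimitive

theorem hasSum_natCast_cpow_neg {s : ℂ} (hs : 1 < s.re) :
    HasSum (fun n : ℕ ↦ ((n : ℝ) : ℂ) ^ (-s)) (riemannZeta s) := by
  have hterm : LSeries.term 1 s = fun n : ℕ ↦ ((n : ℝ) : ℂ) ^ (-s) := by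
    ext n
    have hs0 : -s ≠ 0 := by rintro h; simp [neg_eq_zero.1 h] at hs; linarith
    rcases eq_or_ne n 0 with rfl | hn
    · simp [Complex.zero_cpow hs0]
    · simp [LSeries.term_of_ne_zero hn, Complex.cpow_neg]
  exact hterm ▸ LSeriesHasSum_one hs

theorem deriv_riemannZeta_eq_neg_LSeries {s : ℂ} (hs : 1 < s.re) :
    deriv riemannZeta s = -LSeries (LSeries.logMul 1) s := by
  have hL : LSeries 1 =ᶠ[𝓝 s] riemannZeta := by
    filter_upwards [(isOpen_lt continuous_const Complex.continuous_re).mem_nhds hs] with z hz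
    exact LSeries_one_eq_riemannZeta hz
  rw [← hL.deriv_eq, LSeries_deriv (by simpa [LSeries.abscissaOfAbsConv_one] using mod_cast hs)]

theorem hasSum_log_mul_natCast_cpow_neg {s : ℂ} (hs : 1 < s.re) :
    HasSum (fun n : ℕ ↦ (Real.log n : ℂ) * ((n : ℝ) : ℂ) ^ (-s)) (-deriv riemannZeta s) := by
  have hterm : LSeries.term (LSeries.logMul 1) s =
      fun n : ℕ ↦ (Real.log n : ℂ) * ((n : ℝ) : ℂ) ^ (-s) := by
    ext n
    rcases eq_or_ne n 0 with rfl | hn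
    · simp
    · simp [LSeries.term_of_ne_zero hn, LSeries.logMul, Complex.cpow_neg, div_eq_mul_inv,
        Complex.natCast_log]
  rw [deriv_riemannZeta_eq_neg_LSeries hs, neg_neg, ← hterm]
  exact (LSeriesSummable_logMul_of_lt_re
    (by simpa [LSeries.abscissaOfAbsConv_one] using mod_cast hs)).LSeriesHasSum

theorem norm_ofReal_cpow_le_inv_pow {x : ℝ} (hx : 1 ≤ x) {w : ℂ} {k : ℕ} (hw : w.re ≤ -k) :
    ‖(x : ℂ) ^ w‖ ≤ (x ^ k)⁻¹ := by
  rw [Complex.norm_cpow_eq_rpow_re_of_pos (by linarith), ← Real.rpow_natCast, ← Real.rpow_neg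
    (by linarith)]
  exact Real.rpow_le_rpow_of_exponent_le hx hw

theorem tendsto_ofReal_cpow_atTop_nhds_zero {w : ℂ} (hw : w.re < 0) :
    Tendsto (fun x : ℝ ↦ (x : ℂ) ^ w) atTop (𝓝 0) := by
  rw [tendsto_zero_iff_norm_tendsto_zero]
  refine (tendsto_rpow_neg_atTop (y := -w.re) (by linarith)).congr' ?_
  filter_upwards [eventually_gt_atTop 0] with x hx
  rw [neg_neg, Complex.norm_cpow_eq_rpow_re_of_pos hx]

theorem tendsto_log_mul_ofReal_cpow_atTop_nhds_zero {w : ℂ} (hw : w.re < 0) :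
    Tendsto (fun x : ℝ ↦ (Real.log x : ℂ) * (x : ℂ) ^ w) atTop (𝓝 0) := by
  rw [tendsto_zero_iff_norm_tendsto_zero]
  have hlog : Tendsto (fun x ↦ Real.log x / x ^ (-w.re)) atTop (𝓝 0) :=
    (isLittleO_log_rpow_atTop (neg_pos.2 hw)).tendsto_div_nhds_zero
  refine (norm_zero (E := ℝ) ▸ hlog.norm).congr' ?_
  filter_upwards [eventually_gt_atTop 0] with x hx
  simp [Complex.norm_cpow_eq_rpow_re_of_pos hx, Real.rpow_neg hx.le,
    abs_of_pos (Real.rpow_pos_of_pos hx w.re)]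

section ZetaPartialSums

variable {s : ℂ} {N : ℕ} {x : ℝ}

theorem hasDerivAt_ofReal_cpow_one_sub_div (hs : 1 < s.re) (hx : x ≠ 0) :
    HasDerivAt (fun x : ℝ ↦ (x : ℂ) ^ (1 - s) / (1 - s)) ((x : ℂ) ^ (-s)) x := by
  have hs1 : -s ≠ -1 := by rintro h; simp [neg_inj.1 h] at hs
  simpa [neg_add_eq_sub] using hasDerivAt_ofReal_cpow_const' hx hs1

theorem hasDerivAt_ofReal_cpow_neg (hs : 1 < s.re) (hx : x ≠ 0) :
    HasDerivAt (fun x : ℝ ↦ (x : ℂ) ^ (-s)) (-s * (x : ℂ) ^ (-s - 1)) x := by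
  have hs0 : -s ≠ 0 := by rintro h; simp [neg_eq_zero.1 h] at hs; linarith
  exact hasDerivAt_ofReal_cpow_const hx hs0

theorem norm_riemannZeta_sub_sum_add_le (hs : 1 < s.re) (hN : N ≠ 0) :
    ‖riemannZeta s - ∑ n ∈ range (N + 1), ((n : ℝ) : ℂ) ^ (-s)
      + ((N : ℝ) : ℂ) ^ (1 - s) / (1 - s)‖ ≤ ‖s‖ / N := by
  have hpos {x : ℝ} (hx : (N : ℝ) ≤ x) : 1 ≤ x :=
    (by exact_mod_cast Nat.one_le_iff_ne_zero.2 hN : (1 : ℝ) ≤ N).trans hx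
  have hne {x : ℝ} (hx : (N : ℝ) ≤ x) : x ≠ 0 := (zero_lt_one.trans_le (hpos hx)).ne'
  have h := norm_hasSum_sub_sum_add_primitive_le (N := N) (f := fun x : ℝ ↦ (x : ℂ) ^ (-s))
    (ψ := fun x ↦ -(‖s‖ * x⁻¹)) (ψ' := fun x ↦ ‖s‖ * (x ^ 2)⁻¹)
    (fun x hx ↦ hasDerivAt_ofReal_cpow_one_sub_div hs (hne hx))
    (fun x hx ↦ hasDerivAt_ofReal_cpow_neg hs (hne hx))
    (fun x hx ↦ by simpa using ((hasDerivAt_inv (hne hx)).const_mul ‖s‖).fun_neg)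
    (fun x hx ↦ by
      rw [norm_mul, norm_neg]
      gcongr
      exact norm_ofReal_cpow_le_inv_pow (hpos hx) (by simp; linarith))
    (by
      simpa using (tendsto_ofReal_cpow_atTop_nhds_zero (w := 1 - s) (by simpa using hs)).div_const
        (1 - s))
    (fun x hx ↦ by
      have := hpos hx
      rw [Left.neg_nonpos_iff]; positivity)
    (hasSum_natCast_cpow_neg hs)
  simpa [div_eq_mul_inv] using h

theorem hasDerivAt_log_mul_ofReal_cpow_neg (hs : 1 < s.re) (hx : 0 < x) :
    HasDerivAt (fun x : ℝ ↦ (Real.log x : ℂ) * (x : ℂ) ^ (-s))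
      ((1 - s * Real.log x) * (x : ℂ) ^ (-s - 1)) x := by
  have hx0 : (x : ℂ) ≠ 0 := by exact_mod_cast hx.ne'
  refine ((Real.hasDerivAt_log hx.ne').ofReal_comp.fun_mul
    (hasDerivAt_ofReal_cpow_neg hs hx.ne')).congr_deriv ?_
  rw [Complex.cpow_sub _ _ hx0, Complex.cpow_one]
  push_cast
  ring

theorem hasDerivAt_log_mul_cpow_sub_cpow (hs : 1 < s.re) (hx : 0 < x) :
    HasDerivAt (fun x : ℝ ↦ (Real.log x : ℂ) * ((x : ℂ) ^ (1 - s) / (1 - s))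
      - (x : ℂ) ^ (1 - s) / (1 - s) / (1 - s)) ((Real.log x : ℂ) * (x : ℂ) ^ (-s)) x := by
  have hx0 : (x : ℂ) ≠ 0 := by exact_mod_cast hx.ne'
  have hΦ := hasDerivAt_ofReal_cpow_one_sub_div hs hx.ne'
  refine (((Real.hasDerivAt_log hx.ne').ofReal_comp.fun_mul hΦ).fun_sub
    (hΦ.div_const (1 - s))).congr_deriv ?_
  rw [sub_eq_add_neg 1 s, Complex.cpow_add _ _ hx0, Complex.cpow_one]
  push_cast
  field_simp
  ring

theorem norm_neg_deriv_riemannZeta_sub_sum_add_le (hs : 1 < s.re) (hN : N ≠ 0) :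
    ‖-deriv riemannZeta s - ∑ n ∈ range (N + 1), (Real.log n : ℂ) * ((n : ℝ) : ℂ) ^ (-s)
      + (Real.log N * (((N : ℝ) : ℂ) ^ (1 - s) / (1 - s))
        - ((N : ℝ) : ℂ) ^ (1 - s) / (1 - s) / (1 - s))‖
      ≤ (1 + ‖s‖ * (1 + Real.log N)) / N := by
  have hpos {x : ℝ} (hx : (N : ℝ) ≤ x) : 1 ≤ x :=
    (by exact_mod_cast Nat.one_le_iff_ne_zero.2 hN : (1 : ℝ) ≤ N).trans hx
  have hpos' {x : ℝ} (hx : (N : ℝ) ≤ x) : 0 < x := zero_lt_one.trans_le (hpos hx)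
  have hre : (1 - s).re < 0 := by simpa using hs
  have h := norm_hasSum_sub_sum_add_primitive_le (N := N)
    (f := fun x : ℝ ↦ (Real.log x : ℂ) * (x : ℂ) ^ (-s))
    (ψ := fun x ↦ -((1 + ‖s‖ * (1 + Real.log x)) * x⁻¹))
    (ψ' := fun x ↦ (1 + ‖s‖ * Real.log x) * (x ^ 2)⁻¹)
    (fun x hx ↦ hasDerivAt_log_mul_cpow_sub_cpow hs (hpos' hx))
    (fun x hx ↦ hasDerivAt_log_mul_ofReal_cpow_neg hs (hpos' hx))
    (fun x hx ↦ by
      have hx0 := (hpos' hx).ne'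
      refine (((((Real.hasDerivAt_log hx0).const_add 1).const_mul ‖s‖).const_add 1).fun_mul
        (hasDerivAt_inv hx0)).fun_neg.congr_deriv ?_
      field_simp
      ring)
    (fun x hx ↦ by
      have hlog : 0 ≤ Real.log x := Real.log_nonneg (hpos hx)
      have hnorm : ‖1 - s * (Real.log x : ℂ)‖ ≤ 1 + ‖s‖ * Real.log x :=
        (norm_sub_le _ _).trans_eq (by simp [abs_of_nonneg hlog])
      rw [norm_mul]
      gcongr
      exact norm_ofReal_cpow_le_inv_pow (hpos hx) (by simp; linarith))
    (by
      simpa [mul_div_assoc] using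
        ((tendsto_log_mul_ofReal_cpow_atTop_nhds_zero hre).div_const (1 - s)).sub
        (((tendsto_ofReal_cpow_atTop_nhds_zero hre).div_const (1 - s)).div_const (1 - s)))
    (fun x hx ↦ by
      have := hpos' hx
      have := Real.log_nonneg (hpos hx)
      rw [Left.neg_nonpos_iff]; positivity)
    (hasSum_log_mul_natCast_cpow_neg hs)
  simpa [div_eq_mul_inv] using h

end ZetaPartialSums

section ZetaUpperBounds

variable {s : ℂ}

theorem norm_natCast_cpow_neg_le (hs : 1 < s.re) (n : ℕ) :
    ‖((n : ℝ) : ℂ) ^ (-s)‖ ≤ (n : ℝ)⁻¹ := by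
  rcases Nat.eq_zero_or_pos n with rfl | hn
  · have hs0 : -s ≠ 0 := by rintro h; simp [neg_eq_zero.1 h] at hs; linarith
    simp [Complex.zero_cpow hs0]
  · simpa only [pow_one] using norm_ofReal_cpow_le_inv_pow (x := n) (w := -s) (k := 1)
      (by exact_mod_cast hn) (by simpa using hs.le)

theorem sum_range_inv_le (N : ℕ) : ∑ n ∈ range (N + 1), (n : ℝ)⁻¹ ≤ 1 + Real.log N := by
  simpa [sum_range_succ', harmonic] using harmonic_le_one_add_log N

theorem norm_sum_natCast_cpow_neg_le (hs : 1 < s.re) (N : ℕ) :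
    ‖∑ n ∈ range (N + 1), ((n : ℝ) : ℂ) ^ (-s)‖ ≤ 1 + Real.log N :=
  (norm_sum_le_of_le _ fun n _ ↦ norm_natCast_cpow_neg_le hs n).trans (sum_range_inv_le N)

theorem norm_sum_log_mul_natCast_cpow_neg_le (hs : 1 < s.re) (N : ℕ) :
    ‖∑ n ∈ range (N + 1), (Real.log n : ℂ) * ((n : ℝ) : ℂ) ^ (-s)‖
      ≤ Real.log N * (1 + Real.log N) := by
  have hterm (n : ℕ) (hn : n ∈ range (N + 1)) :
      ‖(Real.log n : ℂ) * ((n : ℝ) : ℂ) ^ (-s)‖ ≤ Real.log N * (n : ℝ)⁻¹ := by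
    have hlog : Real.log n ≤ Real.log N := by
      rcases Nat.eq_zero_or_pos n with rfl | hpos
      · simp [Real.log_natCast_nonneg]
      · exact Real.log_le_log (by exact_mod_cast hpos) (by exact_mod_cast mem_range_succ_iff.1 hn)
    rw [norm_mul, Complex.norm_real, Real.norm_of_nonneg (Real.log_natCast_nonneg n)]
    gcongr
    exact norm_natCast_cpow_neg_le hs n
  calc _ ≤ _ := norm_sum_le_of_le _ hterm
    _ = Real.log N * ∑ n ∈ range (N + 1), (n : ℝ)⁻¹ := by rw [mul_sum]
    _ ≤ _ := mul_le_mul_of_nonneg_left (sum_range_inv_le N) (Real.log_natCast_nonneg N)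

theorem norm_div_floor_abs_im_le (hs : 1 < s.re) (hs2 : s.re ≤ 2) (ht : 2 ≤ |s.im|) :
    ‖s‖ / ⌊|s.im|⌋₊ ≤ 5 / 2 := by
  have hfloor : (2 : ℝ) ≤ ⌊|s.im|⌋₊ := by exact_mod_cast Nat.le_floor (by exact_mod_cast ht)
  rw [div_le_iff₀ (by linarith)]
  linarith [Complex.norm_le_abs_re_add_abs_im s, Nat.lt_floor_add_one |s.im|,
    abs_of_pos (zero_lt_one.trans hs)]

theorem norm_cpow_one_sub_div_le (hs : 1 < s.re) (ht : 2 ≤ |s.im|) {N : ℕ} (hN : N ≠ 0) :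
    ‖((N : ℝ) : ℂ) ^ (1 - s) / (1 - s)‖ ≤ 1 / 2 := by
  have hnum : ‖((N : ℝ) : ℂ) ^ (1 - s)‖ ≤ 1 := by
    simpa using norm_ofReal_cpow_le_inv_pow (k := 0) (w := 1 - s) (x := N)
      (by exact_mod_cast Nat.one_le_iff_ne_zero.2 hN) (by simpa using hs.le)
  have hden : 2 ≤ ‖1 - s‖ := ht.trans (by simpa using Complex.abs_im_le_norm (1 - s))
  rw [norm_div]
  gcongr

theorem norm_le_norm_sub_add_add {E : Type*} [SeminormedAddCommGroup E] (a b c : E) :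
    ‖a‖ ≤ ‖a - b + c‖ + ‖b‖ + ‖c‖ :=
  calc ‖a‖ = ‖a - b + c + b - c‖ := by congr 1; abel
    _ ≤ _ := (norm_sub_le _ _).trans (by gcongr; exact norm_add_le _ _)

theorem norm_riemannZeta_le (hs : 1 < s.re) (hs2 : s.re ≤ 2) (ht : 2 ≤ |s.im|) :
    ‖riemannZeta s‖ ≤ 7 * Real.log |s.im| := by
  have hN : ⌊|s.im|⌋₊ ≠ 0 := (Nat.floor_pos.2 (by linarith)).ne'
  have htail := norm_riemannZeta_sub_sum_add_le hs hN
  have hsum := norm_sum_natCast_cpow_neg_le hs ⌊|s.im|⌋₊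
  have hΦ := norm_cpow_one_sub_div_le hs ht hN
  have hratio := norm_div_floor_abs_im_le hs hs2 ht
  have hlogN : Real.log ⌊|s.im|⌋₊ ≤ Real.log |s.im| :=
    Real.log_le_log (by positivity) (Nat.floor_le (abs_nonneg _))
  have hlog2 : Real.log 2 ≤ Real.log |s.im| := Real.log_le_log two_pos ht
  linarith [Real.log_two_gt_d9, norm_le_norm_sub_add_add (riemannZeta s)
    (∑ n ∈ range (⌊|s.im|⌋₊ + 1), ((n : ℝ) : ℂ) ^ (-s))
    (((⌊|s.im|⌋₊ : ℝ) : ℂ) ^ (1 - s) / (1 - s))]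

theorem norm_deriv_riemannZeta_le (hs : 1 < s.re) (hs2 : s.re ≤ 2) (ht : 2 ≤ |s.im|) :
    ‖deriv riemannZeta s‖ ≤ 14 * Real.log |s.im| ^ 2 := by
  have hN : ⌊|s.im|⌋₊ ≠ 0 := (Nat.floor_pos.2 (by linarith)).ne'
  set N := ⌊|s.im|⌋₊
  set Φ := ((N : ℝ) : ℂ) ^ (1 - s) / (1 - s)
  have htail := norm_neg_deriv_riemannZeta_sub_sum_add_le hs hN
  have hsum := norm_sum_log_mul_natCast_cpow_neg_le hs N
  have hΦ : ‖Φ‖ ≤ 1 / 2 := norm_cpow_one_sub_div_le hs ht hN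
  have hratio := norm_div_floor_abs_im_le hs hs2 ht
  have hlog0 : 0 ≤ Real.log N := Real.log_natCast_nonneg N
  have hlogN : Real.log N ≤ Real.log |s.im| :=
    Real.log_le_log (by positivity) (Nat.floor_le (abs_nonneg _))
  have hlog2 : Real.log 2 ≤ Real.log |s.im| := Real.log_le_log two_pos ht
  have hmain : ‖Real.log N * Φ - Φ / (1 - s)‖ ≤ Real.log N * (1 / 2) + 1 / 2 / 2 := by
    have hden : 2 ≤ ‖1 - s‖ := ht.trans (by simpa using Complex.abs_im_le_norm (1 - s))
    refine norm_sub_le_of_le ?_ ?_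
    · rw [norm_mul, Complex.norm_real, Real.norm_of_nonneg hlog0]
      gcongr
    · rw [norm_div]
      gcongr
  have herror : (1 + ‖s‖ * (1 + Real.log N)) / N ≤ 1 / 2 + 5 / 2 * (1 + Real.log N) := by
    have hN2 : (2 : ℝ) ≤ N := by exact_mod_cast Nat.le_floor (by exact_mod_cast ht)
    rw [add_div, mul_div_right_comm]
    gcongr
  have htri := norm_le_norm_sub_add_add (-deriv riemannZeta s)
    (∑ n ∈ range (N + 1), (Real.log n : ℂ) * ((n : ℝ) : ℂ) ^ (-s))
    (Real.log N * Φ - Φ / (1 - s))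
  rw [norm_neg] at htri
  nlinarith [Real.log_two_gt_d9]

end ZetaUpperBounds

section ZetaLowerBound

variable {s : ℂ}

theorem norm_riemannZeta_ofReal_le {σ : ℝ} (hσ : 1 < σ) (hσ2 : σ ≤ 2) :
    ‖riemannZeta σ‖ ≤ 4 / (σ - 1) := by
  have hδ : 0 < σ - 1 := by linarith
  have htail := norm_riemannZeta_sub_sum_add_le (s := σ) hσ one_ne_zero
  have hsum := norm_sum_natCast_cpow_neg_le (s := σ) hσ 1
  have hnorm : ‖(1 : ℂ) - σ‖ = σ - 1 := by
    rw [norm_sub_rev]; exact_mod_cast abs_of_pos hδ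
  have htri := norm_le_norm_sub_add_add (riemannZeta σ)
    (∑ n ∈ range (1 + 1), ((n : ℝ) : ℂ) ^ (-(σ : ℂ))) (((1 : ℕ) : ℂ) ^ (1 - (σ : ℂ)) / (1 - σ))
  have hle : 1 ≤ 1 / (σ - 1) := by rw [le_div_iff₀ hδ]; linarith
  simp only [Nat.cast_one, Complex.ofReal_one, Complex.one_cpow, norm_div, hnorm, norm_one,
    Complex.norm_real, Real.norm_of_nonneg (zero_le_one.trans hσ.le), Real.log_one, div_one]
    at htail hsum htri
  rw [show 4 / (σ - 1) = 4 * (1 / (σ - 1)) by ring]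
  linarith

theorem one_le_norm_riemannZeta_product (hs : 1 < s.re) :
    1 ≤ ‖riemannZeta s.re‖ ^ 3 * ‖riemannZeta s‖ ^ 4 * ‖riemannZeta (s + s.im * Complex.I)‖ := by
  have h := DirichletCharacter.norm_LFunction_product_ge_one (N := 1)
    (1 : DirichletCharacter ℂ 1) (sub_pos.2 hs) s.im
  rw [DirichletCharacter.LFunctionTrivChar] at h
  simp only [one_pow, DirichletCharacter.LFunction_modOne_eq, norm_mul, norm_pow] at h
  have hre : (1 : ℂ) + (s.re - 1 : ℝ) = s.re := by push_cast; ring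
  have hs1 : (s.re : ℂ) + Complex.I * s.im = s := by rw [mul_comm, Complex.re_add_im]
  have hs2 : (s.re : ℂ) + 2 * Complex.I * s.im = s + s.im * Complex.I := by
    linear_combination hs1
  rwa [hre, hs1, hs2] at h

theorem re_sub_one_pow_three_le (hs : 1 < s.re) (hs2 : s.re ≤ 2) (ht : 2 ≤ |s.im|) :
    (s.re - 1) ^ 3 ≤ 896 * Real.log |s.im| * ‖riemannZeta s‖ ^ 4 := by
  have : 0 < s.re - 1 := by linarith
  have himag : (s + s.im * Complex.I).im = 2 * s.im := by simp; ring
  have hdouble : ‖riemannZeta (s + s.im * Complex.I)‖ ≤ 14 * Real.log |s.im| := by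
    have h := norm_riemannZeta_le (s := s + s.im * Complex.I) (by simpa) (by simpa)
      (by rw [himag, abs_mul, abs_two]; linarith)
    have hlog : Real.log (2 * |s.im|) ≤ 2 * Real.log |s.im| := by
      rw [Real.log_mul two_ne_zero (by linarith)]
      linarith [Real.log_le_log two_pos ht]
    rw [himag, abs_mul, abs_two] at h
    linarith
  have h := calc
    1 ≤ _ := one_le_norm_riemannZeta_product hs
    _ ≤ (4 / (s.re - 1)) ^ 3 * ‖riemannZeta s‖ ^ 4 * (14 * Real.log |s.im|) := by
      gcongr
      exact norm_riemannZeta_ofReal_le hs hs2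
  rw [div_pow, div_mul_eq_mul_div, div_mul_eq_mul_div, le_div_iff₀ (by positivity)] at h
  linarith

theorem norm_riemannZeta_sub_le {w : ℂ} (hs : 1 < s.re) (hs2 : s.re ≤ 2) (hw : 1 < w.re)
    (hw2 : w.re ≤ 2) (him : w.im = s.im) (ht : 2 ≤ |s.im|) :
    ‖riemannZeta w - riemannZeta s‖ ≤ 14 * Real.log |s.im| ^ 2 * ‖w - s‖ := by
  have hconvex : Convex ℝ (Complex.re ⁻¹' Set.Ioc 1 2 ∩ Complex.im ⁻¹' {s.im}) :=
    ((convex_Ioc _ _).linear_preimage Complex.reLm).inter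
      ((convex_singleton _).linear_preimage Complex.imLm)
  refine hconvex.norm_image_sub_le_of_norm_deriv_le (fun z hz ↦ ?_) (fun z hz ↦ ?_)
    ⟨⟨hs, hs2⟩, rfl⟩ ⟨⟨hw, hw2⟩, him⟩
  · exact differentiableAt_riemannZeta fun h ↦ by simp [h] at hz
  · rw [← show z.im = s.im from hz.2]
    exact norm_deriv_riemannZeta_le hz.1.1 hz.1.2 (by rwa [show z.im = s.im from hz.2])

theorem le_norm_riemannZeta_of_le_re {η : ℝ} (hη : 0 < η) (hs : 1 < s.re) (hs2 : s.re ≤ 2)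
    (ht : 2 ≤ |s.im|) (h : η ^ 4 / Real.log |s.im| ^ 9 ≤ s.re - 1) :
    η ^ 3 / (6 * Real.log |s.im| ^ 7) ≤ ‖riemannZeta s‖ := by
  have hL : 0 < Real.log |s.im| := Real.log_pos (by linarith)
  refine (pow_le_pow_iff_left₀ (by positivity) (norm_nonneg _) four_ne_zero).1 ?_
  refine le_of_mul_le_mul_left ?_ (by positivity : 0 < 896 * Real.log |s.im|)
  calc 896 * Real.log |s.im| * (η ^ 3 / (6 * Real.log |s.im| ^ 7)) ^ 4
      = 896 / 1296 * (η ^ 4 / Real.log |s.im| ^ 9) ^ 3 := by field_simp; ring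
    _ ≤ 1 * (s.re - 1) ^ 3 := by gcongr; norm_num
    _ ≤ _ := by rw [one_mul]; exact re_sub_one_pow_three_le hs hs2 ht

/-- The 3-4-1 inequality at distance `δ` of order `(log |t|)⁻⁹` to the right of the line
`Re s = 1` bounds `|ζ|` from below by a multiple of `(log |t|)⁻⁷`, and moving left from there
costs only `δ (log |t|)²`. -/
theorem exists_le_norm_riemannZeta : ∃ c > (0 : ℝ), ∀ s : ℂ, 1 < s.re → s.re ≤ 2 → 2 ≤ |s.im| →
    c / Real.log |s.im| ^ 7 ≤ ‖riemannZeta s‖ := by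
  refine ⟨(1 / 168) ^ 3 / 12, by positivity, fun s hs hs2 ht ↦ ?_⟩
  set L := Real.log |s.im| with hLdef
  have hL : 2 / 3 ≤ L := by linarith [Real.log_two_gt_d9, Real.log_le_log two_pos ht]
  set δ := (1 / 168 : ℝ) ^ 4 / L ^ 9 with hδdef
  have hδ0 : 0 < δ := by positivity
  have hδ1 : δ ≤ 1 := by
    rw [hδdef, div_le_one (by positivity)]
    exact le_trans (by norm_num) (pow_le_pow_left₀ (by norm_num) hL 9)
  rcases le_or_gt δ (s.re - 1) with hfar | hnear
  · refine le_trans ?_ (le_norm_riemannZeta_of_le_re (by norm_num) hs hs2 ht hfar)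
    rw [div_div]
    gcongr
    norm_num
  · set w : ℂ := ⟨1 + δ, s.im⟩
    have hw := le_norm_riemannZeta_of_le_re (s := w) (η := 1 / 168) (by norm_num)
      (by simpa [w]) (by simp [w]; linarith) ht
      (by simp only [w, add_sub_cancel_left]; exact le_rfl)
    have hdist : ‖w - s‖ ≤ δ := by
      rw [show w - s = ((1 + δ - s.re : ℝ) : ℂ) by apply Complex.ext <;> simp [w],
        Complex.norm_real, Real.norm_of_nonneg (by linarith)]
      linarith
    have hmove := norm_riemannZeta_sub_le hs hs2 (w := w) (by simpa [w]) (by simp [w]; linarith)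
      rfl ht
    have hloss : 14 * L ^ 2 * δ = (1 / 168) ^ 3 / 12 / L ^ 7 := by
      rw [hδdef]; field_simp; norm_num
    have hgain : (1 / 168) ^ 3 / (6 * L ^ 7) = 2 * ((1 / 168) ^ 3 / 12 / L ^ 7) := by
      field_simp; norm_num
    have htri := norm_sub_norm_le (riemannZeta w) (riemannZeta s)
    have : 14 * L ^ 2 * ‖w - s‖ ≤ 14 * L ^ 2 * δ := by gcongr
    simp only [← hLdef, show w.im = s.im from rfl] at hw hmove
    linarith

end ZetaLowerBound

section InvZeta

variable {s : ℂ}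

theorem riemannZeta₁_eq_mul (hs : s ≠ 1) :
    riemannZeta₁ s = (s - 1) * riemannZeta s := by
  rw [riemannZeta_eq_inv_sub_mul hs, mul_inv_cancel_left₀ (sub_ne_zero.2 hs)]

theorem riemannZeta₁_ne_zero_of_one_le_re (hs : 1 ≤ s.re) : riemannZeta₁ s ≠ 0 := by
  rcases eq_or_ne s 1 with rfl | hs1
  · simp [riemannZeta₁_one]
  · rw [riemannZeta₁_eq_mul hs1]
    exact mul_ne_zero (sub_ne_zero.2 hs1) (riemannZeta_ne_zero_of_one_le_re hs)

theorem deriv_riemannZeta₁ (hs : s ≠ 1) :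
    deriv riemannZeta₁ s = riemannZeta s + (s - 1) * deriv riemannZeta s := by
  have heq : riemannZeta₁ =ᶠ[𝓝 s] fun z ↦ (z - 1) * riemannZeta z := by
    filter_upwards [isOpen_ne.mem_nhds hs] with z hz using riemannZeta₁_eq_mul hz
  have h := ((hasDerivAt_id s).sub_const 1).fun_mul (differentiableAt_riemannZeta hs).hasDerivAt
  rw [heq.deriv_eq]
  simpa using h.deriv

theorem deriv_inv_riemannZeta₁ (hs : 1 ≤ s.re) :
    deriv (fun z ↦ (riemannZeta₁ z)⁻¹) s = -deriv riemannZeta₁ s / riemannZeta₁ s ^ 2 :=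
  ((differentiable_riemannZeta₁ s).hasDerivAt.fun_inv (riemannZeta₁_ne_zero_of_one_le_re hs)).deriv

theorem log_pow_sixteen_le {t : ℝ} (ht : 1 ≤ t) :
    Real.log t ^ 16 ≤ 64 ^ 16 * (1 + t) ^ (1 / 4 : ℝ) := by
  have hlog : Real.log t ≤ 64 * (1 + t) ^ (1 / 64 : ℝ) := calc
    Real.log t ≤ Real.log (1 + t) := Real.log_le_log (by linarith) (by linarith)
    _ ≤ _ := Real.log_le_rpow_div (by linarith) (by norm_num : (0 : ℝ) < 1 / 64)
    _ = _ := by ring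
  calc Real.log t ^ 16 ≤ (64 * (1 + t) ^ (1 / 64 : ℝ)) ^ 16 :=
        pow_le_pow_left₀ (Real.log_nonneg ht) hlog 16
    _ = 64 ^ 16 * (1 + t) ^ (1 / 4 : ℝ) := by
      rw [mul_pow, ← Real.rpow_mul_natCast (by linarith)]
      norm_num

theorem exists_norm_deriv_inv_riemannZeta₁_mul_le_of_two_le :
    ∃ C, ∀ s : ℂ, 1 < s.re → s.re ≤ 2 → 2 ≤ |s.im| →
      ‖deriv (fun z ↦ (riemannZeta₁ z)⁻¹) s‖ * (1 + |s.im|) ^ (3 / 4 : ℝ) ≤ C := by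
  obtain ⟨c, hc, hlower⟩ := exists_le_norm_riemannZeta
  refine ⟨42 * 64 ^ 16 / c ^ 2, fun s hs hs2 ht ↦ ?_⟩
  have hs1 : s ≠ 1 := by rintro rfl; simp at hs
  have hL : 2 / 3 ≤ Real.log |s.im| := by
    linarith [Real.log_two_gt_d9, Real.log_le_log two_pos ht]
  have hdist : |s.im| ≤ ‖s - 1‖ := by simpa using Complex.abs_im_le_norm (s - 1)
  have hζ := norm_riemannZeta_le hs hs2 ht
  have hζ' := norm_deriv_riemannZeta_le hs hs2 ht
  have hinv := hlower s hs hs2 ht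
  have hlog := log_pow_sixteen_le (one_le_two.trans ht)
  rw [deriv_inv_riemannZeta₁ hs.le, norm_div, norm_neg, norm_pow, deriv_riemannZeta₁ hs1,
    riemannZeta₁_eq_mul hs1, norm_mul]
  set t := |s.im|
  set L := Real.log t
  set d := ‖s - 1‖
  have hL0 : 0 < L := by linarith
  have hd0 : 0 < d := by linarith
  have hnum : ‖riemannZeta s + (s - 1) * deriv riemannZeta s‖ ≤ 28 * L ^ 2 * d := calc
    _ ≤ 7 * L + d * (14 * L ^ 2) := norm_add_le_of_le hζ (norm_mul_le_of_le le_rfl hζ')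
    _ ≤ 28 * L ^ 2 * d := by nlinarith [mul_le_mul hL (ht.trans hdist) two_pos.le hL0.le]
  calc _ ≤ 28 * L ^ 2 * d / (d * (c / L ^ 7)) ^ 2 * (1 + t) ^ (3 / 4 : ℝ) := by gcongr
    _ = 28 / c ^ 2 * L ^ 16 / d * (1 + t) ^ (3 / 4 : ℝ) := by field_simp
    _ ≤ 28 / c ^ 2 * (64 ^ 16 * (1 + t) ^ (1 / 4 : ℝ)) / (2 / 3 * (1 + t))
        * (1 + t) ^ (3 / 4 : ℝ) := by
      gcongr
      linarith
    _ = 42 * 64 ^ 16 / c ^ 2 * (((1 + t) ^ (1 / 4 : ℝ) * (1 + t) ^ (3 / 4 : ℝ)) / (1 + t)) := by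
      field_simp; norm_num
    _ = 42 * 64 ^ 16 / c ^ 2 := by
      rw [← Real.rpow_add (by positivity), show (1 / 4 + 3 / 4 : ℝ) = 1 by norm_num,
        Real.rpow_one, div_self (by positivity), mul_one]

theorem exists_norm_deriv_inv_riemannZeta₁_le :
    ∃ C, ∀ s : ℂ, 1 < s.re → s.re ≤ 2 →
      ‖deriv (fun z ↦ (riemannZeta₁ z)⁻¹) s‖ ≤ C * (1 + |s.im|) ^ (-(3 / 4) : ℝ) := by
  obtain ⟨C, hC⟩ := exists_norm_deriv_inv_riemannZeta₁_mul_le_of_two_le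
  have hcont : ContinuousOn (fun s : ℂ ↦ deriv (fun z ↦ (riemannZeta₁ z)⁻¹) s
      * ((1 + |s.im|) ^ (3 / 4 : ℝ) : ℝ)) (Set.Icc 1 2 ×ℂ Set.Icc (-2) 2) := by
    have hderiv : Continuous (deriv riemannZeta₁) :=
      (differentiable_riemannZeta₁.contDiff (n := 1)).continuous_deriv le_rfl
    have hquot : ContinuousOn (fun s ↦ -deriv riemannZeta₁ s / riemannZeta₁ s ^ 2)
        (Set.Icc 1 2 ×ℂ Set.Icc (-2) 2) :=
      hderiv.neg.continuousOn.div (differentiable_riemannZeta₁.continuous.pow 2).continuousOn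
        fun s hs ↦ pow_ne_zero 2 (riemannZeta₁_ne_zero_of_one_le_re hs.1.1)
    refine (hquot.congr fun s hs ↦ deriv_inv_riemannZeta₁ hs.1.1).mul
      (Complex.continuous_ofReal.comp ?_).continuousOn
    exact (continuous_const.add Complex.continuous_im.abs).rpow_const fun s ↦ by right; norm_num
  obtain ⟨C', hC'⟩ := (isCompact_Icc.reProdIm isCompact_Icc).exists_bound_of_continuousOn hcont
  refine ⟨max C C', fun s hs hs2 ↦ ?_⟩
  have hpos : 0 < 1 + |s.im| := by positivity
  rw [Real.rpow_neg hpos.le, ← div_eq_mul_inv, le_div_iff₀ (by positivity)]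
  rcases le_total 2 |s.im| with ht | ht
  · exact (hC s hs hs2 ht).trans (le_max_left _ _)
  · have h := hC' s ⟨⟨hs.le, hs2⟩, abs_le.1 ht⟩
    rw [norm_mul, Complex.norm_real, Real.norm_of_nonneg (by positivity)] at h
    exact h.trans (le_max_right _ _)

end InvZeta

section Plancherel

open MeasureTheory FourierTransform
open scoped ContDiff SchwartzMap RealInnerProductSpace

variable {V E : Type*} [NormedAddCommGroup V] [InnerProductSpace ℝ V] [FiniteDimensional ℝ V]
  [MeasurableSpace V] [BorelSpace V]
  [NormedAddCommGroup E] [InnerProductSpace ℂ E] [CompleteSpace E]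

theorem integral_schwartz_smul_fourierInv_toLp {f : V → E} (hf : Integrable f)
    (hf₂ : MemLp (𝓕 f) 2) (g : 𝓢(V, ℂ)) :
    ∫ x, g x • (𝓕⁻ hf₂.toLp : Lp (α := V) E 2 volume) x = ∫ x, g x • f x := by
  calc
    _ = Lp.toTemperedDistribution (𝓕⁻ hf₂.toLp : Lp (α := V) E 2 volume) g := by simp
    _ = Lp.toTemperedDistribution hf₂.toLp (𝓕⁻ g) := by
      rw [← Lp.fourierInv_toTemperedDistribution_eq, TemperedDistribution.fourierInv_apply]
    _ = ∫ x, (𝓕⁻ g) x • 𝓕 f x := by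
      rw [Lp.toTemperedDistribution_apply]
      refine integral_congr_ae ?_
      filter_upwards [hf₂.coeFn_toLp] with x hx
      rw [hx]
    _ = ∫ x, 𝓕 (𝓕⁻ g) x • f x := by
      rw [SchwartzMap.fourier_coe]
      simpa using! (VectorFourier.integral_fourierIntegral_smul_eq_flip (L := innerₗ V)
        Real.continuous_fourierChar continuous_inner (𝓕⁻ g).integrable hf).symm
    _ = ∫ x, g x • f x := by rw [FourierTransform.fourier_fourierInv_eq]

theorem fourierInv_toLp_ae_eq {f : V → E} (hf : Integrable f) (hf₂ : MemLp (𝓕 f) 2) :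
    (𝓕⁻ hf₂.toLp : Lp (α := V) E 2 volume) =ᵐ[volume] f := by
  refine ae_eq_of_integral_contDiff_smul_eq ((Lp.memLp _).locallyIntegrable one_le_two)
    hf.locallyIntegrable fun g g_smooth g_cpt ↦ ?_
  have hg_cpt : HasCompactSupport (Complex.ofRealCLM ∘ g) := g_cpt.comp_left rfl
  have hg_smooth : ContDiff ℝ ∞ (Complex.ofRealCLM ∘ g) := by fun_prop
  simpa using integral_schwartz_smul_fourierInv_toLp hf hf₂ (hg_cpt.toSchwartzMap hg_smooth)

theorem eLpNorm_fourier_eq {f : V → E} (hf : Integrable f) (hf₂ : MemLp (𝓕 f) 2) :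
    eLpNorm (𝓕 f) 2 = eLpNorm f 2 := by
  have hnorm : ‖(𝓕⁻ hf₂.toLp : Lp (α := V) E 2 volume)‖ = ‖hf₂.toLp‖ :=
    (Lp.fourierTransformₗᵢ V E).symm.norm_map _
  rw [← eLpNorm_congr_ae (fourierInv_toLp_ae_eq hf hf₂), ← Lp.enorm_def, ← ofReal_norm, hnorm,
    ofReal_norm, Lp.enorm_toLp]

theorem integrable_exp_smul_comp_exp_neg {E : Type*} [NormedAddCommGroup E]
    [NormedSpace ℂ E] {f : ℝ → E} {σ : ℝ} (hf : MellinConvergent f σ) :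
    Integrable fun u : ℝ ↦ Real.exp (-σ * u) • f (Real.exp (-u)) := by
  have hderiv (u : ℝ) (_ : u ∈ Set.univ) :
      HasDerivWithinAt (fun u ↦ Real.exp (-u)) (-Real.exp (-u)) Set.univ u := by
    simpa using! (hasDerivAt_neg u).exp
  have hinj : Set.univ.InjOn fun u : ℝ ↦ Real.exp (-u) :=
    (Real.exp_injective.comp neg_injective).injOn
  have himage : (fun u : ℝ ↦ Real.exp (-u)) '' Set.univ = Set.Ioi 0 := by
    rw [Set.image_univ, ← Real.range_exp]
    exact neg_surjective.range_comp Real.exp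
  rw [MellinConvergent, ← himage, integrableOn_image_iff_integrableOn_abs_deriv_smul
    MeasurableSet.univ hderiv hinj, integrableOn_univ] at hf
  refine hf.congr (.of_forall fun u ↦ ?_)
  have hpow : (Real.exp (-u) : ℂ) ^ ((σ : ℂ) - 1) = (Real.exp (-u * (σ - 1)) : ℂ) := by
    rw [Real.exp_mul, Complex.ofReal_cpow (Real.exp_pos _).le]
    push_cast; rfl
  simp only [abs_neg, abs_of_pos (Real.exp_pos (-u))]
  rw [hpow, Complex.coe_smul, smul_smul, ← Real.exp_add]
  ring_nf

theorem eLpNorm_le_of_norm_mellin_le {f : ℝ → E} {g : ℝ → ℝ} {σ : ℝ} (hf : MellinConvergent f σ)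
    (hg : MemLp g 2) (hfg : ∀ t : ℝ, ‖mellin f (σ + 2 * π * t * Complex.I)‖ ≤ g t) :
    eLpNorm (fun u : ℝ ↦ Real.exp (-σ * u) • f (Real.exp (-u))) 2 ≤ eLpNorm g 2 := by
  have hint := integrable_exp_smul_comp_exp_neg hf
  have hfourier (t : ℝ) :
      ‖𝓕 (fun u : ℝ ↦ Real.exp (-σ * u) • f (Real.exp (-u))) t‖ ≤ g t := by
    simpa [mellin_eq_fourier, mul_div_cancel_left₀ _ (mul_ne_zero two_ne_zero pi_ne_zero)]
      using hfg t
  have hcont : Continuous (𝓕 fun u : ℝ ↦ Real.exp (-σ * u) • f (Real.exp (-u))) :=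
    VectorFourier.fourierIntegral_continuous Real.continuous_fourierChar continuous_inner hint
  rw [← eLpNorm_fourier_eq hint (hg.mono' hcont.aestronglyMeasurable (.of_forall hfourier))]
  exact eLpNorm_mono_real hfourier

end Plancherel

section MellinMoebius

open MeasureTheory Asymptotics

theorem mellin_sum_Icc_floor_neg (a : ℕ → ℂ) {r : ℝ} (hr : 0 ≤ r) {s : ℂ} (hs : r < s.re)
    (hsum : LSeriesSummable a s)
    (ha : (fun n ↦ ∑ k ∈ Icc 1 n, a k) =O[atTop] fun n ↦ (n : ℝ) ^ r) :
    mellin (fun t ↦ ∑ k ∈ Icc 1 ⌊t⌋₊, a k) (-s) = LSeries a s / s := by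
  have hs0 : s ≠ 0 := fun h ↦ (hr.trans_lt hs).ne' (by simp [h])
  rw [LSeries_eq_mul_integral a hr hs hsum ha, mul_div_cancel_left₀ _ hs0, mellin,
    ← integral_Ici_eq_integral_Ioi (x := (1 : ℝ)),
    setIntegral_eq_of_subset_of_forall_sdiff_eq_zero measurableSet_Ioi
    (Set.Ici_subset_Ioi.2 zero_lt_one)]
  · simp only [smul_eq_mul, mul_comm, neg_add']
  · intro t ht
    have ht1 : t < 1 := not_le.1 ht.2
    simp [Nat.floor_eq_zero.2 ht1]

theorem term_div_natCast (a : ℕ → ℂ) (s : ℂ) :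
    LSeries.term (fun n ↦ a n / n) s = LSeries.term a (1 + s) := by
  ext n
  rcases eq_or_ne n 0 with rfl | hn
  · simp
  · rw [LSeries.term_of_ne_zero hn, LSeries.term_of_ne_zero hn, div_div,
      Complex.cpow_add _ _ (mod_cast hn), Complex.cpow_one]

/-- The partial sum `∑_{n ≤ x} μ(n) / n`. -/
noncomputable def moebiusDivSum (x : ℝ) : ℝ :=
  ∑ n ∈ Icc 1 ⌊x⌋₊, (moebius n : ℝ) / n

theorem moebiusDivSum_of_lt_one {x : ℝ} (hx : x < 1) : moebiusDivSum x = 0 := by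
  simp [moebiusDivSum, Nat.floor_eq_zero.2 hx]

theorem sum_moebius_mul_natDiv_eq_one {N : ℕ} (hN : N ≠ 0) :
    ∑ n ∈ Icc 1 N, (moebius n : ℝ) * (N / n : ℕ) = 1 := by
  have hsum := sum_Ioc_mul_zeta_eq_sum (moebius : ArithmeticFunction ℝ) N
  rw [coe_moebius_mul_coe_zeta] at hsum
  simpa [one_apply, hN, Nat.one_le_iff_ne_zero, ← Icc_add_one_left_eq_Ioc] using hsum.symm

-- Compare `∑ μ(n) N/n` with `∑ μ(n) ⌊N/n⌋ = 1`: the term `n = 1` has no fractional part.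
theorem abs_sum_moebius_div_le_one (N : ℕ) : |∑ n ∈ Icc 1 N, (moebius n : ℝ) / n| ≤ 1 := by
  rcases eq_or_ne N 0 with rfl | hN
  · simp
  have hfract (n : ℕ) : |(moebius n : ℝ) * ((N : ℝ) / n - (N / n : ℕ))| ≤ 1 := by
    rw [abs_mul, ← Nat.floor_div_eq_div (K := ℝ)]
    exact mul_le_one₀ (mod_cast abs_moebius_le_one) (abs_nonneg _)
      (Nat.abs_sub_floor_le (by positivity))
  have hsplit : (N : ℝ) * ∑ n ∈ Icc 1 N, (moebius n : ℝ) / n =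
      1 + ∑ n ∈ Ioc 1 N, (moebius n : ℝ) * ((N : ℝ) / n - (N / n : ℕ)) := by
    rw [← sum_moebius_mul_natDiv_eq_one hN, ← sub_eq_iff_eq_add', mul_sum, ← sum_sub_distrib,
      ← sum_Ioc_add_eq_sum_Icc]
    · simp [mul_sub, mul_div_left_comm]
    · exact Nat.pos_of_ne_zero hN
  have hle : (N : ℝ) * |∑ n ∈ Icc 1 N, (moebius n : ℝ) / n| ≤ N * 1 := calc
    _ = |1 + ∑ n ∈ Ioc 1 N, (moebius n : ℝ) * ((N : ℝ) / n - (N / n : ℕ))| := by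
      rw [← hsplit, abs_mul, Nat.abs_cast]
    _ ≤ 1 + ∑ _n ∈ Ioc 1 N, (1 : ℝ) := by
      refine (abs_add_le _ _).trans ?_
      rw [abs_one]
      gcongr
      exact (abs_sum_le_sum_abs _ _).trans (sum_le_sum fun _ _ ↦ hfract _)
    _ = N * 1 := by
      simp [Nat.cast_pred (Nat.pos_of_ne_zero hN)]
  exact le_of_mul_le_mul_left hle (mod_cast Nat.pos_of_ne_zero hN)

theorem abs_moebiusDivSum_le_one (x : ℝ) : |moebiusDivSum x| ≤ 1 :=
  abs_sum_moebius_div_le_one _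

theorem mellin_moebiusDivSum_neg {s : ℂ} (hs : 0 < s.re) :
    mellin (fun t ↦ (moebiusDivSum t : ℂ)) (-s) = (riemannZeta₁ (1 + s))⁻¹ := by
  have hs0 : s ≠ 0 := fun h ↦ hs.ne' (by simp [h])
  have hs1 : 1 < (1 + s).re := by simpa using hs
  have hsum : LSeriesSummable (fun n ↦ (moebius n : ℂ) / n) s := by
    rw [LSeriesSummable, term_div_natCast]
    exact LSeriesSummable_moebius_iff.2 hs1
  have hbound : (fun N ↦ ∑ n ∈ Icc 1 N, (moebius n : ℂ) / n) =O[atTop]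
      fun N ↦ (N : ℝ) ^ (0 : ℝ) :=
    .of_bound' (.of_forall fun N ↦ by
      simpa using! Complex.norm_real _ |>.trans_le (abs_sum_moebius_div_le_one N))
  have hL : LSeries (fun n ↦ (moebius n : ℂ) / n) s = (riemannZeta (1 + s))⁻¹ := by
    rw [LSeries, term_div_natCast, ← LSeries_zeta_eq_riemannZeta hs1]
    exact eq_inv_of_mul_eq_one_right (LSeries_zeta_mul_Lseries_moebius hs1)
  have hmellin := mellin_sum_Icc_floor_neg _ le_rfl hs hsum hbound
  rw [hL, div_eq_mul_inv, ← mul_inv, mul_comm] at hmellin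
  rw [riemannZeta₁_eq_mul (by simpa using hs0), add_sub_cancel_left, ← hmellin]
  simp [moebiusDivSum]

theorem measurable_moebiusDivSum : Measurable moebiusDivSum :=
  (measurable_from_nat (f := fun n ↦ ∑ k ∈ Icc 1 n, (moebius k : ℝ) / k)).comp Nat.measurable_floor

theorem locallyIntegrable_moebiusDivSum : LocallyIntegrable fun t ↦ (moebiusDivSum t : ℂ) :=
  (locallyIntegrable_const (1 : ℝ)).mono
    (Complex.measurable_ofReal.comp measurable_moebiusDivSum).aestronglyMeasurable
    (.of_forall fun t ↦ by simpa using abs_moebiusDivSum_le_one t)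

theorem hasMellin_log_smul_moebiusDivSum {s : ℂ} (hs : 0 < s.re) :
    HasMellin (fun t ↦ Real.log t • (moebiusDivSum t : ℂ)) (-s)
      (-deriv (fun z ↦ (riemannZeta₁ z)⁻¹) (1 + s)) := by
  have htop : (fun t ↦ (moebiusDivSum t : ℂ)) =O[atTop] fun t : ℝ ↦ t ^ (-0 : ℝ) :=
    .of_bound' (.of_forall fun t ↦ by simpa using abs_moebiusDivSum_le_one t)
  have hbot : (fun t ↦ (moebiusDivSum t : ℂ)) =O[𝓝[>] 0] fun t ↦ t ^ (-(-s.re - 1)) := by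
    refine EventuallyEq.trans_isBigO ?_ (isBigO_zero _ _)
    filter_upwards [nhdsWithin_le_nhds (Iio_mem_nhds zero_lt_one)] with t ht
    simp [moebiusDivSum_of_lt_one ht]
  obtain ⟨hconv, hderiv⟩ := mellin_hasDerivAt_of_isBigO_rpow (s := -s)
    (locallyIntegrable_moebiusDivSum.locallyIntegrableOn _) htop (by simpa using hs) hbot (by simp)
  have heq : mellin (fun t ↦ (moebiusDivSum t : ℂ)) =ᶠ[𝓝 (-s)]
      fun w ↦ (riemannZeta₁ (1 - w))⁻¹ := by
    have hopen : IsOpen {w : ℂ | w.re < 0} := isOpen_lt Complex.continuous_re continuous_const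
    filter_upwards [hopen.mem_nhds (by simpa using hs : (-s).re < 0)] with w hw
    simpa [sub_eq_add_neg] using mellin_moebiusDivSum_neg (s := -w) (by simpa using hw)
  refine ⟨hconv, hderiv.unique (HasDerivAt.congr_of_eventuallyEq ?_ heq)⟩
  have hinv : HasDerivAt (fun z ↦ (riemannZeta₁ z)⁻¹) (deriv (fun z ↦ (riemannZeta₁ z)⁻¹) (1 + s))
      (1 - -s) := by
    rw [sub_neg_eq_add]
    exact ((differentiable_riemannZeta₁ _).inv
      (riemannZeta₁_ne_zero_of_one_le_re (by simpa using hs.le))).hasDerivAt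
  exact hinv.comp_const_sub 1 (-s)

theorem memLp_two_one_add_abs_rpow : MemLp (fun t : ℝ ↦ (1 + |t|) ^ (-(3 / 4) : ℝ)) 2 := by
  rw [memLp_two_iff_integrable_sq (by fun_prop : Measurable _).aestronglyMeasurable]
  refine (integrable_one_add_norm (E := ℝ) (r := 3 / 2) (by norm_num)).congr (.of_forall fun t ↦ ?_)
  dsimp only
  rw [← rpow_natCast, ← rpow_mul (by positivity), Real.norm_eq_abs]
  norm_num

theorem exists_norm_mellin_log_smul_moebiusDivSum_le :
    ∃ C : ℝ, ∀ c : ℝ, 0 < c → c ≤ 1 → ∀ t : ℝ,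
      ‖mellin (fun x ↦ Real.log x • (moebiusDivSum x : ℂ)) ((-c : ℝ) + 2 * π * t * Complex.I)‖ ≤
        C * (1 + |t|) ^ (-(3 / 4) : ℝ) := by
  obtain ⟨C, hC⟩ := exists_norm_deriv_inv_riemannZeta₁_le
  have hC0 : 0 ≤ C := by simpa using (norm_nonneg _).trans (hC 2 (by simp) (by simp))
  refine ⟨C, fun c hc hc1 t ↦ ?_⟩
  have hs : ((-c : ℝ) + 2 * π * t * Complex.I : ℂ) = -(c - 2 * π * t * Complex.I) := by
    push_cast; ring
  rw [hs, (hasMellin_log_smul_moebiusDivSum (by simpa using hc)).2, norm_neg]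
  refine (hC _ (by simpa using hc) (by simp; linarith)).trans ?_
  have him : |(1 + (c - 2 * π * t * Complex.I) : ℂ).im| = 2 * π * |t| := by
    simp [abs_mul, abs_of_pos pi_pos]
  rw [him]
  gcongr ?_ * ?_
  refine rpow_le_rpow_of_nonpos (by positivity) ?_ (by norm_num)
  nlinarith [abs_nonneg t, pi_gt_three]

theorem exists_eLpNorm_mul_moebiusDivSum_exp_le :
    ∃ K : NNReal, ∀ c : ℝ, 0 < c → c ≤ 1 →
      eLpNorm (fun u : ℝ ↦ Real.exp (c * u) * (u * moebiusDivSum (Real.exp (-u)))) 2 ≤ K := by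
  obtain ⟨C, hC⟩ := exists_norm_mellin_log_smul_moebiusDivSum_le
  have hJ : MemLp (fun t : ℝ ↦ C * (1 + |t|) ^ (-(3 / 4) : ℝ)) 2 :=
    memLp_two_one_add_abs_rpow.const_mul C
  refine ⟨(eLpNorm (fun t : ℝ ↦ C * (1 + |t|) ^ (-(3 / 4) : ℝ)) 2).toNNReal, fun c hc hc1 ↦ ?_⟩
  rw [ENNReal.coe_toNNReal hJ.eLpNorm_ne_top]
  have hconv : MellinConvergent (fun x ↦ Real.log x • (moebiusDivSum x : ℂ)) (-c : ℝ) := by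
    simpa using (hasMellin_log_smul_moebiusDivSum (s := c) (by simpa using hc)).1
  refine le_trans (le_of_eq (eLpNorm_congr_norm_ae (.of_forall fun u ↦ ?_)))
    (eLpNorm_le_of_norm_mellin_le hconv hJ (hC c hc hc1))
  simp [Complex.norm_exp]

end MellinMoebius

section PointwiseBound

open MeasureTheory

theorem abs_moebiusDivSum_sub_le {x z : ℝ} (hx : 0 < x) (hxz : x ≤ z) :
    |moebiusDivSum z - moebiusDivSum x| ≤ (z - x + 1) / x := by
  have hfloor : ⌊x⌋₊ ≤ ⌊z⌋₊ := Nat.floor_mono hxz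
  have hterm : ∀ n ∈ Ioc ⌊x⌋₊ ⌊z⌋₊, |(moebius n : ℝ) / n| ≤ 1 / x := fun n hn ↦ by
    have hxn : x ≤ n := (Nat.lt_of_floor_lt (mem_Ioc.1 hn).1).le
    rw [abs_div, Nat.abs_cast]
    gcongr
    exact mod_cast abs_moebius_le_one
  have hsub : moebiusDivSum z - moebiusDivSum x =
      ∑ n ∈ Ioc ⌊x⌋₊ ⌊z⌋₊, (moebius n : ℝ) / n := by
    have hIcc (N : ℕ) : Icc 1 N = Ioc 0 N := Icc_add_one_left_eq_Ioc 0 N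
    rw [moebiusDivSum, moebiusDivSum, hIcc, hIcc, sub_eq_iff_eq_add',
      sum_Ioc_consecutive _ (Nat.zero_le _) hfloor]
  calc |moebiusDivSum z - moebiusDivSum x|
      ≤ ∑ n ∈ Ioc ⌊x⌋₊ ⌊z⌋₊, 1 / x := hsub ▸ (abs_sum_le_sum_abs _ _).trans (sum_le_sum hterm)
    _ = ((⌊z⌋₊ : ℝ) - ⌊x⌋₊) / x := by simp [Nat.cast_sub hfloor, div_eq_mul_inv]
    _ ≤ (z - x + 1) / x := by
      gcongr
      linarith [Nat.floor_le (hx.le.trans hxz), Nat.lt_floor_add_one x]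

theorem half_abs_moebiusDivSum_le {x z : ℝ} (hx : 0 < x) (hη : 4 / x ≤ |moebiusDivSum x|)
    (hxz : x ≤ z) (hzx : z ≤ x * (1 + |moebiusDivSum x| / 4)) :
    |moebiusDivSum x| / 2 ≤ |moebiusDivSum z| := by
  have hsub : (z - x + 1) / x ≤ |moebiusDivSum x| / 2 := by
    rw [div_le_iff₀ hx] at hη ⊢
    linarith
  linarith [abs_sub_abs_le_abs_sub (moebiusDivSum x) (moebiusDivSum z),
    abs_sub_comm (moebiusDivSum x) (moebiusDivSum z), abs_moebiusDivSum_sub_le hx hxz]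

theorem div_five_le_log_one_add_div_four {η : ℝ} (hη : 0 ≤ η) (hη1 : η ≤ 1) :
    η / 5 ≤ Real.log (1 + η / 4) := by
  have hpos : 0 < 1 + η / 4 := by linarith
  refine le_trans ?_ (one_sub_inv_le_log_of_pos hpos)
  rw [← sub_nonneg]
  have : 1 - (1 + η / 4)⁻¹ - η / 5 = η * (1 - η) / (5 * (4 + η)) := by
    field_simp
    ring
  rw [this]
  have := sub_nonneg.2 hη1
  positivity

theorem sq_mul_sub_le_of_eLpNorm_two_le {E : Type*} [NormedAddCommGroup E] {f : ℝ → E}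
    (hf : AEStronglyMeasurable f) {K : NNReal} (hK : eLpNorm f 2 ≤ K) {ε a b : ℝ} (hε : 0 ≤ ε)
    (hle : ∀ u ∈ Set.Icc a b, ε ≤ ‖f u‖) : ε ^ 2 * (b - a) ≤ K ^ 2 := by
  have hsub : Set.Icc a b ⊆ {u | ENNReal.ofReal ε ≤ ‖f u‖ₑ} := fun u hu ↦ by
    simpa [← ofReal_norm] using ENNReal.ofReal_le_ofReal (hle u hu)
  have hcheb : ENNReal.ofReal ε ^ 2 * ENNReal.ofReal (b - a) ≤ (K : ENNReal) ^ 2 := calc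
    _ ≤ ENNReal.ofReal ε ^ 2 * volume {u | ENNReal.ofReal ε ≤ ‖f u‖ₑ} := by
      rw [← Real.volume_Icc]
      gcongr
    _ ≤ eLpNorm f 2 ^ 2 := by
      simpa using mul_meas_ge_le_pow_eLpNorm' volume two_ne_zero ENNReal.ofNat_ne_top hf
        (ENNReal.ofReal ε)
    _ ≤ (K : ENNReal) ^ 2 := by gcongr
  rwa [← ENNReal.ofReal_pow hε, ← ENNReal.ofReal_mul (by positivity), ← ENNReal.coe_pow,
    ENNReal.ofReal_le_coe, NNReal.coe_pow] at hcheb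

theorem exp_neg_two_mul_le_norm_exp_mul_moebiusDivSum {x u : ℝ} (hx : Real.exp 1 ≤ x)
    (hη : 4 / x ≤ |moebiusDivSum x|)
    (hu : u ∈ Set.Icc (-(Real.log x + Real.log (1 + |moebiusDivSum x| / 4))) (-Real.log x)) :
    Real.exp (-2) * (Real.log x * (|moebiusDivSum x| / 2)) ≤
      ‖Real.exp ((Real.log x)⁻¹ * u) * (u * moebiusDivSum (Real.exp (-u)))‖ := by
  have hx0 : 0 < x := (Real.exp_pos 1).trans_le hx
  have hL : 1 ≤ Real.log x := (le_log_iff_exp_le hx0).2 hx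
  have hη0 : 0 < 1 + |moebiusDivSum x| / 4 := by positivity
  have hℓ : Real.log (1 + |moebiusDivSum x| / 4) ≤ 1 := by
    linarith [log_le_sub_one_of_pos hη0, abs_moebiusDivSum_le_one x]
  have hxz : x ≤ Real.exp (-u) := (log_le_iff_le_exp hx0).1 (by linarith [hu.2])
  have hzx : Real.exp (-u) ≤ x * (1 + |moebiusDivSum x| / 4) := by
    rw [← le_log_iff_exp_le (by positivity), Real.log_mul hx0.ne' hη0.ne']
    linarith [hu.1]
  have hexp : -2 ≤ (Real.log x)⁻¹ * u := by
    rw [inv_mul_eq_div, le_div_iff₀ (by linarith)]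
    linarith [hu.1]
  rw [norm_mul, norm_mul, Real.norm_of_nonneg (Real.exp_pos _).le, Real.norm_eq_abs,
    Real.norm_eq_abs]
  gcongr
  · exact (le_neg.2 hu.2).trans (neg_le_abs u)
  · exact half_abs_moebiusDivSum_le hx0 hη hxz hzx

-- A large value of `moebiusDivSum` at `x` persists on `[x, x * (1 + |moebiusDivSum x| / 4)]`,
-- so it contributes to the `L²` norm with weight exponent `c = 1 / log x`.
theorem exists_abs_moebiusDivSum_pow_three_mul_le :
    ∃ K : ℝ, ∀ x : ℝ, 1 ≤ x → |moebiusDivSum x| ^ 3 * (1 + Real.log x) ^ 2 ≤ K := by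
  obtain ⟨K, hK⟩ := exists_eLpNorm_mul_moebiusDivSum_exp_le
  refine ⟨max 16 (80 * Real.exp 2 ^ 2 * K ^ 2), fun x hx ↦ ?_⟩
  have hx0 : 0 < x := one_pos.trans_le hx
  have hlog : 0 ≤ Real.log x := Real.log_nonneg hx
  have hη1 := abs_moebiusDivSum_le_one x
  rcases lt_or_ge |moebiusDivSum x| (4 / x) with hsmall | hlarge
  · refine le_max_of_le_left ?_
    calc |moebiusDivSum x| ^ 3 * (1 + Real.log x) ^ 2 ≤ (4 / x) ^ 2 * x ^ 2 := by
          gcongr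
          · calc |moebiusDivSum x| ^ 3 ≤ |moebiusDivSum x| ^ 2 :=
                pow_le_pow_of_le_one (abs_nonneg _) hη1 (by norm_num)
              _ ≤ (4 / x) ^ 2 := by gcongr
          · linarith [log_le_sub_one_of_pos hx0]
      _ = 16 := by
        field_simp
        norm_num
  rcases lt_or_ge x (Real.exp 1) with hxe | hxe
  · refine le_max_of_le_left ?_
    have hlog1 : Real.log x ≤ 1 := (log_le_iff_le_exp hx0).2 hxe.le
    calc |moebiusDivSum x| ^ 3 * (1 + Real.log x) ^ 2 ≤ 1 ^ 3 * (1 + 1) ^ 2 := by gcongr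
      _ ≤ 16 := by norm_num
  · refine le_max_of_le_right ?_
    have hlog1 : 1 ≤ Real.log x := (le_log_iff_exp_le hx0).2 hxe
    have hcheb := sq_mul_sub_le_of_eLpNorm_two_le
      (by have := measurable_moebiusDivSum; fun_prop)
      (hK _ (inv_pos.2 (one_pos.trans_le hlog1)) (inv_le_one_of_one_le₀ hlog1)) (by positivity)
      fun u hu ↦ exp_neg_two_mul_le_norm_exp_mul_moebiusDivSum hxe hlarge hu
    rw [sub_neg_eq_add, neg_add_cancel_left, Real.exp_neg] at hcheb
    have hlength := div_five_le_log_one_add_div_four (abs_nonneg (moebiusDivSum x)) hη1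
    calc |moebiusDivSum x| ^ 3 * (1 + Real.log x) ^ 2
        ≤ |moebiusDivSum x| ^ 3 * (Real.log x + Real.log x) ^ 2 := by gcongr
      _ = 80 * Real.exp 2 ^ 2 * (((Real.exp 2)⁻¹ * (Real.log x * (|moebiusDivSum x| / 2))) ^ 2 *
          (|moebiusDivSum x| / 5)) := by
        field_simp
        ring
      _ ≤ 80 * Real.exp 2 ^ 2 * K ^ 2 := by
        gcongr
        exact (by gcongr : _ ≤ _).trans hcheb

theorem exists_abs_moebiusDivSum_le :
    ∃ C : ℝ, ∀ (k : ℕ) (y : ℝ), 2 ^ k ≤ 2 * y →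
      |moebiusDivSum y| ≤ C * ((k : ℝ) + 1) ^ (-(2 / 3) : ℝ) := by
  obtain ⟨K, hK⟩ := exists_abs_moebiusDivSum_pow_three_mul_le
  have hK0 : 0 ≤ K := (by positivity : (0 : ℝ) ≤ _).trans (hK 1 le_rfl)
  refine ⟨(16 * K) ^ (3⁻¹ : ℝ), fun k y hky ↦ ?_⟩
  rcases lt_or_ge y 1 with hy | hy
  · rw [moebiusDivSum_of_lt_one hy, abs_zero]
    positivity
  have hlog : ((k : ℝ) + 1) ≤ 4 * (1 + Real.log y) := by
    have := Real.log_le_log (by positivity) hky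
    rw [Real.log_pow, Real.log_mul two_ne_zero (by positivity)] at this
    nlinarith [log_two_gt_d9, log_two_lt_d9, Real.log_nonneg hy]
  have hcube : |moebiusDivSum y| ^ 3 ≤ 16 * K / ((k : ℝ) + 1) ^ 2 := by
    rw [le_div_iff₀ (by positivity)]
    calc |moebiusDivSum y| ^ 3 * ((k : ℝ) + 1) ^ 2
        ≤ |moebiusDivSum y| ^ 3 * (4 * (1 + Real.log y)) ^ 2 := by gcongr
      _ ≤ 16 * K := by linarith [hK y hy]
  calc |moebiusDivSum y| = (|moebiusDivSum y| ^ 3) ^ (3⁻¹ : ℝ) := by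
        simpa using (Real.pow_rpow_inv_natCast (abs_nonneg (moebiusDivSum y)) three_ne_zero).symm
    _ ≤ (16 * K / ((k : ℝ) + 1) ^ 2) ^ (3⁻¹ : ℝ) := by gcongr
    _ = (16 * K) ^ (3⁻¹ : ℝ) * ((k : ℝ) + 1) ^ (-(2 / 3) : ℝ) := by
      rw [Real.div_rpow (by positivity) (by positivity), div_eq_mul_inv, ← Real.rpow_natCast,
        ← Real.rpow_mul (by positivity), ← Real.rpow_neg (by positivity)]
      norm_num

end PointwiseBound

section MoebiusOmegaConvolution

open scoped ArithmeticFunction.zeta ArithmeticFunction.Moebius ArithmeticFunction.Omega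

theorem pmul_cardFactors_mul {R : Type*} [CommSemiring R] (f g : ArithmeticFunction R) :
    pmul (Ω : ArithmeticFunction R) (f * g) =
      pmul (Ω : ArithmeticFunction R) f * g + f * pmul (Ω : ArithmeticFunction R) g := by
  ext n
  simp only [pmul_apply, ArithmeticFunction.add_apply, mul_apply, mul_sum, ← sum_add_distrib]
  refine sum_congr rfl fun ⟨a, b⟩ hab ↦ ?_
  obtain ⟨rfl, hn⟩ := Nat.mem_divisorsAntidiagonal.1 hab
  rw [natCoe_apply, natCoe_apply, natCoe_apply,
    cardFactors_mul (left_ne_zero_of_mul hn) (right_ne_zero_of_mul hn)]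
  push_cast
  ring

theorem pdiv_id_mul_pdiv_id {R : Type*} [Semifield R] (f g : ArithmeticFunction R) :
    pdiv f (ArithmeticFunction.id : ArithmeticFunction R) *
        pdiv g (ArithmeticFunction.id : ArithmeticFunction R) =
      pdiv (f * g) (ArithmeticFunction.id : ArithmeticFunction R) := by
  ext n
  simp only [pdiv_apply, mul_apply, sum_div]
  refine sum_congr rfl fun ⟨a, b⟩ hab ↦ ?_
  obtain ⟨rfl, -⟩ := Nat.mem_divisorsAntidiagonal.1 hab
  simp [div_mul_div_comm]

theorem card_filter_isPrimePow_divisors (n : ℕ) : #{d ∈ n.divisors | IsPrimePow d} = Ω n := by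
  induction n using Nat.recOnPrimeCoprime with
  | zero => simp
  | prime_pow p k hp =>
    rw [card_filter, Nat.sum_divisors_prime_pow hp, sum_range_succ',
      cardFactors_apply_prime_pow hp]
    simp [not_isPrimePow_one, isPrimePow_pow_iff, hp.isPrimePow]
  | coprime a b ha hb hab iha ihb =>
    rw [Nat.mul_divisors_filter_prime_pow hab, filter_union,
      card_union_of_disjoint (Nat.disjoint_divisors_filter_isPrimePow hab), iha, ihb,
      cardFactors_mul (by lia) (by lia)]

/-- The indicator function of the prime powers. -/
def primePowIndicator : ArithmeticFunction ℕ :=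
  ⟨fun n ↦ if IsPrimePow n then 1 else 0, if_neg not_isPrimePow_zero⟩

theorem primePowIndicator_mul_zeta : primePowIndicator * ζ = Ω := by
  ext n
  rw [← natCoe_nat ζ, coe_mul_zeta_apply, ← card_filter_isPrimePow_divisors, card_filter]
  rfl

variable {R : Type*} [CommRing R]

theorem moebius_mul_coe_cardFactors :
    (μ : ArithmeticFunction R) * (Ω : ArithmeticFunction R) = primePowIndicator := by
  rw [← primePowIndicator_mul_zeta, natCoe_mul, mul_left_comm, coe_moebius_mul_coe_zeta, mul_one]

theorem pmul_cardFactors_moebius :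
    pmul (Ω : ArithmeticFunction R) (μ : ArithmeticFunction R) =
      -((primePowIndicator : ArithmeticFunction R) * μ) := by
  have hone : pmul (Ω : ArithmeticFunction R) 1 = 0 := by
    ext n
    rcases eq_or_ne n 1 with rfl | hn <;> simp [*]
  have hderiv := pmul_cardFactors_mul (μ : ArithmeticFunction R) (ζ : ArithmeticFunction R)
  rw [coe_moebius_mul_coe_zeta, hone, pmul_zeta, moebius_mul_coe_cardFactors] at hderiv
  rw [← neg_mul, ← eq_neg_of_add_eq_zero_left hderiv.symm, mul_assoc, coe_zeta_mul_coe_moebius,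
    mul_one]

theorem moebius_mul_card_primeFactors (n : ℕ) :
    (μ n : R) * (#n.primeFactors : R) = -((primePowIndicator : ArithmeticFunction R) * μ) n := by
  rw [← ArithmeticFunction.neg_apply, ← pmul_cardFactors_moebius, pmul_apply, natCoe_apply,
    intCoe_apply, mul_comm]
  by_cases hn : Squarefree n
  · rw [← (cardDistinctFactors_eq_cardFactors_iff_squarefree hn.ne_zero).2 hn,
      cardDistinctFactors_apply]
    rfl
  · simp [moebius_eq_zero_of_not_squarefree hn]

theorem sum_moebius_mul_card_primeFactors_div (x : ℝ) :
    ∑ n ∈ Icc 1 ⌊x⌋₊, (μ n : ℝ) * (#n.primeFactors : ℝ) / n =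
      -∑ q ∈ Icc 1 ⌊x⌋₊ with IsPrimePow q, (q : ℝ)⁻¹ * moebiusDivSum (x / q) := by
  have hconv := sum_Ioc_mul_eq_sum_sum
    (pdiv (primePowIndicator : ArithmeticFunction ℝ) (ArithmeticFunction.id : ArithmeticFunction ℝ))
    (pdiv (μ : ArithmeticFunction ℝ) (ArithmeticFunction.id : ArithmeticFunction ℝ)) ⌊x⌋₊
  have hIcc (N : ℕ) : Icc 1 N = Ioc 0 N := Icc_add_one_left_eq_Ioc 0 N
  simp_rw [pdiv_id_mul_pdiv_id, ← hIcc, pdiv_apply, natCoe_apply, intCoe_apply, id_apply] at hconv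
  simp_rw [moebius_mul_card_primeFactors, neg_div, sum_neg_distrib, hconv, sum_filter,
    moebiusDivSum, Nat.floor_div_natCast]
  congr! 2 with q
  simp [primePowIndicator, ite_div, ite_mul]

end MoebiusOmegaConvolution

section PrimePowers

open Chebyshev

theorem log_two_le_vonMangoldt {q : ℕ} (hq : IsPrimePow q) : Real.log 2 ≤ vonMangoldt q := by
  rw [vonMangoldt_apply, if_pos hq]
  gcongr
  exact mod_cast (Nat.minFac_prime hq.ne_one).two_le

theorem mul_log_two_mul_card_isPrimePow_le {j b : ℕ} {s : Finset ℕ}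
    (hs : ∀ q ∈ s, IsPrimePow q ∧ 2 ^ j ≤ q ∧ q ≤ b) :
    j * Real.log 2 * #s ≤ psi b + j * (psi b - theta b) := by
  have hweight : ∀ q ∈ s, j * Real.log 2 ≤ vonMangoldt q +
      j * (if ¬q.Prime then vonMangoldt q else 0) := fun q hq ↦ by
    obtain ⟨hpp, hjq, -⟩ := hs q hq
    split_ifs with hp
    · rw [mul_zero, add_zero, vonMangoldt_apply_prime hp, ← Real.log_pow]
      gcongr
      exact mod_cast hjq
    · exact le_add_of_nonneg_of_le vonMangoldt_nonneg (by gcongr; exact log_two_le_vonMangoldt hpp)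
  have hsub : s ⊆ Ioc 0 ⌊(b : ℝ)⌋₊ := fun q hq ↦ by
    obtain ⟨hpp, -, hqb⟩ := hs q hq
    simpa using ⟨hpp.pos, hqb⟩
  calc j * Real.log 2 * #s = ∑ _q ∈ s, j * Real.log 2 := by simp [mul_comm]
    _ ≤ ∑ q ∈ s, (vonMangoldt q + j * (if ¬q.Prime then vonMangoldt q else 0)) :=
      sum_le_sum hweight
    _ ≤ ∑ q ∈ Ioc 0 ⌊(b : ℝ)⌋₊, (vonMangoldt q + j * (if ¬q.Prime then vonMangoldt q else 0)) := by
      refine sum_le_sum_of_subset_of_nonneg hsub fun q _ _ ↦ ?_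
      have := vonMangoldt_nonneg (n := q)
      positivity
    _ = psi b + j * (psi b - theta b) := by
      rw [sum_add_distrib, ← mul_sum, psi_sub_theta_eq_sum_not_prime, sum_filter, psi]

theorem natCast_mul_sqrt_two_pow_le (j : ℕ) : j * √(2 ^ j) ≤ 4 * (2 : ℝ) ^ j := by
  have hlog : j * Real.log 2 ≤ 2 * √(2 ^ j) := by
    have := Real.log_le_sub_one_of_pos (by positivity : 0 < √((2 : ℝ) ^ j))
    rw [Real.log_sqrt (by positivity), Real.log_pow] at this
    linarith
  have hj : (j : ℝ) ≤ 4 * √(2 ^ j) := by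
    nlinarith [log_two_gt_d9, (Nat.cast_nonneg j : (0 : ℝ) ≤ j)]
  calc j * √(2 ^ j) ≤ 4 * √(2 ^ j) * √(2 ^ j) := by gcongr
    _ = 4 * (2 : ℝ) ^ j := by rw [mul_assoc, Real.mul_self_sqrt (by positivity)]

theorem exists_mul_card_isPrimePow_le :
    ∃ C : ℝ, 0 ≤ C ∧ ∀ (j : ℕ) (s : Finset ℕ), (∀ q ∈ s, IsPrimePow q ∧ Nat.log 2 q = j) →
      j * #s ≤ C * 2 ^ j := by
  obtain ⟨B, hB⟩ := psi_sub_theta_le_mul_sqrt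
  have hB0 : 0 ≤ B := by simpa using (sub_nonneg.2 (theta_le_psi 1)).trans (hB 1)
  have hlog2 : 0 < Real.log 2 := Real.log_pos one_lt_two
  refine ⟨2 * (Real.log 4 + 4 + 4 * B) / Real.log 2, by positivity, fun j s hs ↦ ?_⟩
  have hcard := mul_log_two_mul_card_isPrimePow_le (j := j) (b := 2 ^ (j + 1)) (s := s)
    fun q hq ↦ by
      obtain ⟨hpp, rfl⟩ := hs q hq
      exact ⟨hpp, Nat.pow_log_le_self 2 hpp.ne_zero,
        (Nat.lt_pow_succ_log_self one_lt_two q).le⟩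
  push_cast at hcard
  have hjsqrt : j * √(2 ^ (j + 1)) ≤ 4 * (2 : ℝ) ^ (j + 1) := calc
    _ ≤ (j + 1 : ℕ) * √(2 ^ (j + 1)) := by
      gcongr
      lia
    _ ≤ _ := natCast_mul_sqrt_two_pow_le _
  rw [div_mul_eq_mul_div, le_div_iff₀ hlog2]
  calc j * #s * Real.log 2 = j * Real.log 2 * #s := by ring
    _ ≤ psi (2 ^ (j + 1)) + j * (psi (2 ^ (j + 1)) - theta (2 ^ (j + 1))) := hcard
    _ ≤ (Real.log 4 + 4) * 2 ^ (j + 1) + j * (B * √(2 ^ (j + 1))) := by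
      gcongr
      exacts [psi_le_const_mul_self (by positivity), hB _]
    _ ≤ (Real.log 4 + 4) * 2 ^ (j + 1) + B * (4 * 2 ^ (j + 1)) := by
      rw [mul_left_comm]
      gcongr
    _ = 2 * (Real.log 4 + 4 + 4 * B) * 2 ^ j := by ring

theorem exists_sum_inv_isPrimePow_le :
    ∃ C : ℝ, 0 ≤ C ∧ ∀ (j : ℕ) (s : Finset ℕ), (∀ q ∈ s, IsPrimePow q ∧ Nat.log 2 q = j) →
      ∑ q ∈ s, (q : ℝ)⁻¹ ≤ C * ((j : ℝ) + 1)⁻¹ := by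
  obtain ⟨C, hC0, hC⟩ := exists_mul_card_isPrimePow_le
  refine ⟨2 * C, by positivity, fun j s hs ↦ ?_⟩
  rcases s.eq_empty_or_nonempty with rfl | ⟨p, hp⟩
  · simpa using by positivity
  have hj : 1 ≤ j := by
    rw [← (hs p hp).2]
    exact Nat.log_pos one_lt_two (hs p hp).1.two_le
  have hjR : (1 : ℝ) ≤ j := mod_cast hj
  have hinv : ∀ q ∈ s, (q : ℝ)⁻¹ ≤ (2 ^ j)⁻¹ := fun q hq ↦ by
    obtain ⟨hpp, rfl⟩ := hs q hq
    gcongr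
    exact mod_cast Nat.pow_log_le_self 2 hpp.ne_zero
  rw [← div_eq_mul_inv, le_div_iff₀ (by positivity)]
  calc (∑ q ∈ s, (q : ℝ)⁻¹) * (j + 1) ≤ (#s * (2 ^ j)⁻¹) * (j + j) := by
        gcongr
        simpa using sum_le_sum hinv
    _ = 2 * (j * #s) * (2 ^ j)⁻¹ := by ring
    _ ≤ 2 * (C * 2 ^ j) * (2 ^ j)⁻¹ := by
      gcongr 2 * ?_ * _
      exact hC j s hs
    _ = 2 * C := by field_simp

end PrimePowers

section DyadicConvolution

theorem inv_mul_rpow_neg_le {a b θ : ℝ} (ha : 0 < a) (hb : 0 < b) (hθ : θ ≤ 1) :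
    a⁻¹ * b ^ (-θ) ≤ (a + b) ^ (-θ) * (a⁻¹ + b⁻¹) := by
  have hab : 0 < a + b := by positivity
  have hpow {c : ℝ} (hc : 0 < c) : c ^ (-θ) = c ^ (1 - θ) / c := by
    rw [sub_eq_neg_add, rpow_add_one hc.ne', mul_div_cancel_right₀ _ hc.ne']
  calc a⁻¹ * b ^ (-θ) = b ^ (1 - θ) / (a * b) := by
        rw [hpow hb, inv_mul_eq_div, div_div, mul_comm b]
    _ ≤ (a + b) ^ (1 - θ) / (a * b) := by
      gcongr
      linarith
    _ = (a + b) ^ (-θ) * (a⁻¹ + b⁻¹) := by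
      rw [hpow hab]
      field_simp
      ring

theorem sum_inv_mul_rpow_neg_le (J : ℕ) {θ : ℝ} (hθ : θ ≤ 1) :
    ∑ j ∈ range (J + 1), ((j : ℝ) + 1)⁻¹ * (((J - j : ℕ) : ℝ) + 1) ^ (-θ) ≤
      2 * (1 + Real.log (J + 1)) * ((J : ℝ) + 2) ^ (-θ) := by
  have hharmonic : ∑ j ∈ range (J + 1), ((j : ℝ) + 1)⁻¹ ≤ 1 + Real.log (J + 1) := by
    simpa [harmonic] using harmonic_le_one_add_log (J + 1)
  have hreflect : ∑ j ∈ range (J + 1), (((J - j : ℕ) : ℝ) + 1)⁻¹ =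
      ∑ j ∈ range (J + 1), ((j : ℝ) + 1)⁻¹ := by
    simpa using sum_range_reflect (fun j : ℕ ↦ ((j : ℝ) + 1)⁻¹) (J + 1)
  have hterm : ∀ j ∈ range (J + 1), ((j : ℝ) + 1)⁻¹ * (((J - j : ℕ) : ℝ) + 1) ^ (-θ) ≤
      ((J : ℝ) + 2) ^ (-θ) * (((j : ℝ) + 1)⁻¹ + (((J - j : ℕ) : ℝ) + 1)⁻¹) := fun j hj ↦ by
    have hsum : ((j : ℝ) + 1) + (((J - j : ℕ) : ℝ) + 1) = J + 2 := by
      rw [Nat.cast_sub (Nat.lt_succ_iff.1 (mem_range.1 hj))]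
      ring
    rw [← hsum]
    exact inv_mul_rpow_neg_le (by positivity) (by positivity) hθ
  calc _ ≤ ∑ j ∈ range (J + 1),
        ((J : ℝ) + 2) ^ (-θ) * (((j : ℝ) + 1)⁻¹ + (((J - j : ℕ) : ℝ) + 1)⁻¹) := sum_le_sum hterm
    _ = ((J : ℝ) + 2) ^ (-θ) * (2 * ∑ j ∈ range (J + 1), ((j : ℝ) + 1)⁻¹) := by
      rw [← mul_sum, sum_add_distrib, hreflect, two_mul]
    _ ≤ ((J : ℝ) + 2) ^ (-θ) * (2 * (1 + Real.log (J + 1))) := by gcongr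
    _ = _ := mul_comm _ _

end DyadicConvolution

section MainBound

theorem two_pow_log_floor_le {x : ℝ} (hx : 1 ≤ x) : (2 : ℝ) ^ Nat.log 2 ⌊x⌋₊ ≤ x :=
  (mod_cast Nat.pow_log_le_self 2 (Nat.floor_pos.2 hx).ne' :
    (2 : ℝ) ^ Nat.log 2 ⌊x⌋₊ ≤ ⌊x⌋₊).trans (Nat.floor_le (zero_le_one.trans hx))

theorem exists_abs_moebiusDivSum_div_le :
    ∃ C : ℝ, 0 ≤ C ∧ ∀ (x : ℝ) (q : ℕ), 1 ≤ x → q ≠ 0 → Nat.log 2 q ≤ Nat.log 2 ⌊x⌋₊ →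
      |moebiusDivSum (x / q)| ≤
        C * (((Nat.log 2 ⌊x⌋₊ - Nat.log 2 q : ℕ) : ℝ) + 1) ^ (-(2 / 3) : ℝ) := by
  obtain ⟨C, hC⟩ := exists_abs_moebiusDivSum_le
  refine ⟨C, by simpa using (abs_nonneg _).trans (hC 0 1 (by norm_num)),
    fun x q hx hq hlog ↦ hC _ _ ?_⟩
  have hJ := two_pow_log_floor_le hx
  have hq2 : (q : ℝ) ≤ 2 ^ (Nat.log 2 q + 1) :=
    mod_cast (Nat.lt_pow_succ_log_self one_lt_two q).le
  rw [mul_div_assoc', le_div_iff₀ (by positivity)]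
  calc (2 : ℝ) ^ (Nat.log 2 ⌊x⌋₊ - Nat.log 2 q) * q
      ≤ 2 ^ (Nat.log 2 ⌊x⌋₊ - Nat.log 2 q) * 2 ^ (Nat.log 2 q + 1) := by gcongr
    _ = 2 * 2 ^ Nat.log 2 ⌊x⌋₊ := by
      rw [← pow_add, ← pow_succ', ← add_assoc, Nat.sub_add_cancel hlog]
    _ ≤ 2 * x := by gcongr

theorem exists_sum_inv_mul_abs_moebiusDivSum_le :
    ∃ C : ℝ, 0 ≤ C ∧ ∀ x : ℝ, 1 ≤ x →
      ∑ q ∈ Icc 1 ⌊x⌋₊ with IsPrimePow q, (q : ℝ)⁻¹ * |moebiusDivSum (x / q)| ≤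
        C * ∑ j ∈ range (Nat.log 2 ⌊x⌋₊ + 1),
          ((j : ℝ) + 1)⁻¹ * (((Nat.log 2 ⌊x⌋₊ - j : ℕ) : ℝ) + 1) ^ (-(2 / 3) : ℝ) := by
  obtain ⟨B, hB0, hB⟩ := exists_sum_inv_isPrimePow_le
  obtain ⟨C, hC0, hC⟩ := exists_abs_moebiusDivSum_div_le
  refine ⟨B * C, by positivity, fun x hx ↦ ?_⟩
  set J := Nat.log 2 ⌊x⌋₊
  set s := {q ∈ Icc 1 ⌊x⌋₊ | IsPrimePow q}
  have hlog : ∀ q ∈ s, Nat.log 2 q ∈ range (J + 1) := fun q hq ↦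
    mem_range_succ_iff.2 (Nat.log_mono_right (mem_Icc.1 (mem_filter.1 hq).1).2)
  rw [← sum_fiberwise_of_maps_to hlog, mul_sum]
  refine sum_le_sum fun j _ ↦ ?_
  calc ∑ q ∈ s with Nat.log 2 q = j, (q : ℝ)⁻¹ * |moebiusDivSum (x / q)|
      ≤ ∑ q ∈ s with Nat.log 2 q = j,
          (q : ℝ)⁻¹ * (C * (((J - j : ℕ) : ℝ) + 1) ^ (-(2 / 3) : ℝ)) := by
        refine sum_le_sum fun q hq ↦ ?_
        obtain ⟨hqs, rfl⟩ := mem_filter.1 hq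
        gcongr
        exact hC x q hx (mem_filter.1 hqs).2.ne_zero (mem_range_succ_iff.1 (hlog q hqs))
    _ ≤ (B * ((j : ℝ) + 1)⁻¹) * (C * (((J - j : ℕ) : ℝ) + 1) ^ (-(2 / 3) : ℝ)) := by
      rw [← sum_mul]
      gcongr
      refine hB j _ fun q hq ↦ ?_
      obtain ⟨hqs, hj⟩ := mem_filter.1 hq
      exact ⟨(mem_filter.1 hqs).2, hj⟩
    _ = _ := by ring

theorem log_mul_rpow_neg_le_sqrt_div_sqrt {L : ℝ} (hL : 1 ≤ L) :
    Real.log L * L ^ (-(2 / 3) : ℝ) ≤ 2 * (√(Real.log L) / √L) := by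
  have hL0 : 0 < L := one_pos.trans_le hL
  have hlog : 0 ≤ Real.log L := Real.log_nonneg hL
  have hsqrt : √(Real.log L) ≤ 2 * L ^ (1 / 6 : ℝ) := by
    refine Real.sqrt_le_iff.2 ⟨by positivity, ?_⟩
    rw [mul_pow, ← rpow_natCast (L ^ (1 / 6 : ℝ)), ← rpow_mul hL0.le]
    calc Real.log L ≤ L ^ (1 / 3 : ℝ) / (1 / 3) := Real.log_le_rpow_div hL0.le (by norm_num)
      _ = 3 * L ^ (1 / 3 : ℝ) := by ring
      _ ≤ 4 * L ^ (1 / 3 : ℝ) := by gcongr; norm_num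
      _ = _ := by norm_num
  calc Real.log L * L ^ (-(2 / 3) : ℝ) = √(Real.log L) * √(Real.log L) * L ^ (-(2 / 3) : ℝ) := by
        rw [Real.mul_self_sqrt hlog]
    _ ≤ √(Real.log L) * (2 * L ^ (1 / 6 : ℝ)) * L ^ (-(2 / 3) : ℝ) := by gcongr
    _ = 2 * (√(Real.log L) * L ^ (-(1 / 2) : ℝ)) := by
      rw [mul_assoc, mul_assoc, ← rpow_add hL0]
      norm_num
      ring
    _ = 2 * (√(Real.log L) / √L) := by
      rw [rpow_neg hL0.le, ← Real.sqrt_eq_rpow, div_eq_mul_inv]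

theorem exp_one_le_log {x : ℝ} (hx : 16 ≤ x) : Real.exp 1 ≤ Real.log x := by
  have hlog : Real.log 16 = 4 * Real.log 2 := by
    rw [show (16 : ℝ) = 2 ^ 4 by norm_num, Real.log_pow]
    norm_num
  linarith [Real.log_le_log (by norm_num) hx, log_two_gt_d9, exp_one_lt_d9]

theorem one_add_log_mul_rpow_neg_le {x : ℝ} (hx : 16 ≤ x) :
    (1 + Real.log (Nat.log 2 ⌊x⌋₊ + 1)) * ((Nat.log 2 ⌊x⌋₊ : ℝ) + 2) ^ (-(2 / 3) : ℝ) ≤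
      6 * (√(Real.log (Real.log x)) / √(Real.log x)) := by
  have hx0 : 0 < x := by linarith
  have hL := exp_one_le_log hx
  have hL2 : 2 ≤ Real.log x := by linarith [exp_one_gt_d9]
  have hL0 : 0 < Real.log x := by linarith
  have hLL : 1 ≤ Real.log (Real.log x) := (le_log_iff_exp_le hL0).2 hL
  have hJx := two_pow_log_floor_le (by linarith : 1 ≤ x)
  set J := Nat.log 2 ⌊x⌋₊
  have hxJ : x ≤ (2 : ℝ) ^ (J + 1) := (Nat.lt_floor_add_one x).le.trans
    (mod_cast Nat.lt_pow_succ_log_self one_lt_two ⌊x⌋₊)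
  have hupper : (J : ℝ) + 1 ≤ Real.log x * Real.exp 1 := by
    have := Real.log_le_log (by positivity) hJx
    rw [Real.log_pow] at this
    nlinarith [log_two_gt_d9, exp_one_gt_d9, (Nat.cast_nonneg J : (0 : ℝ) ≤ J)]
  have hlower : Real.log x ≤ J + 2 := by
    have := Real.log_le_log hx0 hxJ
    rw [Real.log_pow] at this
    push_cast at this
    nlinarith [log_two_lt_d9, (Nat.cast_nonneg J : (0 : ℝ) ≤ J)]
  have hlogJ : Real.log (J + 1) ≤ Real.log (Real.log x) + 1 := by
    have := Real.log_le_log (by positivity) hupper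
    rwa [Real.log_mul hL0.ne' (Real.exp_pos 1).ne', Real.log_exp] at this
  calc (1 + Real.log (J + 1)) * ((J : ℝ) + 2) ^ (-(2 / 3) : ℝ)
      ≤ (3 * Real.log (Real.log x)) * Real.log x ^ (-(2 / 3) : ℝ) :=
        mul_le_mul (by linarith) (rpow_le_rpow_of_nonpos hL0 hlower (by norm_num))
          (by positivity) (by positivity)
    _ ≤ 3 * (2 * (√(Real.log (Real.log x)) / √(Real.log x))) := by
      rw [mul_assoc]
      gcongr 3 * ?_
      exact log_mul_rpow_neg_le_sqrt_div_sqrt (by linarith)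
    _ = _ := by ring

theorem exists_abs_sum_moebius_mul_card_primeFactors_div_le :
    ∃ C > (0 : ℝ), ∀ x : ℝ, 16 ≤ x →
      |∑ n ∈ Icc 1 ⌊x⌋₊, (moebius n : ℝ) * (#n.primeFactors : ℝ) / n| ≤
        C * √(Real.log (Real.log x)) / √(Real.log x) := by
  obtain ⟨C, hC0, hC⟩ := exists_sum_inv_mul_abs_moebiusDivSum_le
  refine ⟨12 * C + 1, by positivity, fun x hx ↦ ?_⟩
  rw [sum_moebius_mul_card_primeFactors_div, abs_neg, mul_div_assoc]
  calc |∑ q ∈ Icc 1 ⌊x⌋₊ with IsPrimePow q, (q : ℝ)⁻¹ * moebiusDivSum (x / q)|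
      ≤ ∑ q ∈ Icc 1 ⌊x⌋₊ with IsPrimePow q, (q : ℝ)⁻¹ * |moebiusDivSum (x / q)| :=
        (abs_sum_le_sum_abs _ _).trans_eq (sum_congr rfl fun q _ ↦ by simp [abs_mul])
    _ ≤ C * (2 * (1 + Real.log (Nat.log 2 ⌊x⌋₊ + 1)) *
          ((Nat.log 2 ⌊x⌋₊ : ℝ) + 2) ^ (-(2 / 3) : ℝ)) :=
      (hC x (by linarith)).trans (by gcongr; exact sum_inv_mul_rpow_neg_le _ (by norm_num))
    _ ≤ C * (2 * (6 * (√(Real.log (Real.log x)) / √(Real.log x)))) := by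
      rw [mul_assoc 2]
      gcongr C * (2 * ?_)
      exact one_add_log_mul_rpow_neg_le hx
    _ ≤ (12 * C + 1) * (√(Real.log (Real.log x)) / √(Real.log x)) := by
      have : 0 ≤ √(Real.log (Real.log x)) / √(Real.log x) := by positivity
      linarith

theorem tendsto_sqrt_log_log_div_sqrt_log :
    Tendsto (fun x ↦ √(Real.log (Real.log x)) / √(Real.log x)) atTop (𝓝 0) := by
  have h : Tendsto (fun L ↦ Real.log L / L) atTop (𝓝 0) := by
    simpa using Real.isLittleO_log_id_atTop.tendsto_div_nhds_zero
  refine ((h.comp Real.tendsto_log_atTop).sqrt.congr' ?_).trans (by simp)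
  filter_upwards [eventually_ge_atTop 1] with x hx
  exact Real.sqrt_div' _ (Real.log_nonneg hx)

end MainBound

end MoebiusOmega

/-- There is a constant `C > 0` such that for all `x ≥ 16`,
`|Σ_{n ≤ x} μ(n) ω(n)/n| ≤ C √(log log x) / √(log x)`; consequently the partial sums
`Σ_{n ≤ x} μ(n) ω(n)/n` tend to `0` as `x → ∞`, i.e. `Σ_{n≥1} μ(n)ω(n)/n = 0`. -/
theorem moebius_omega_div_sum :
    (∃ C > (0 : ℝ), ∀ x : ℝ, 16 ≤ x →
      |∑ n ∈ Finset.Icc 1 ⌊x⌋₊, (moebius n : ℝ) * (n.primeFactors.card : ℝ) / n|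
        ≤ C * Real.sqrt (Real.log (Real.log x)) / Real.sqrt (Real.log x)) ∧
    Tendsto (fun x : ℝ =>
        ∑ n ∈ Finset.Icc 1 ⌊x⌋₊, (moebius n : ℝ) * (n.primeFactors.card : ℝ) / n)
      atTop (nhds 0) := by
  refine ⟨MoebiusOmega.exists_abs_sum_moebius_mul_card_primeFactors_div_le, ?_⟩
  obtain ⟨C, -, hC⟩ := MoebiusOmega.exists_abs_sum_moebius_mul_card_primeFactors_div_le
  refine squeeze_zero_norm'
    (a := fun x ↦ C * (√(Real.log (Real.log x)) / √(Real.log x))) ?_ ?_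
  · filter_upwards [eventually_ge_atTop 16] with x hx
    simpa [mul_div_assoc] using hC x hx
  · simpa using MoebiusOmega.tendsto_sqrt_log_log_div_sqrt_log.const_mul C
end

section
/- For every ε > 0 there exists a constant C > 0 such that for all real x ≥ 16, the number of positive integers n ≤ x whose largest prime factor P(n) repeats (i.e., P(n)² divides n, with n ≥ 2) is at most C · x · exp(−(1/2 − ε)·√(log x · log log x)). -/
/-!
Let `L = √(log x · log log x)`. If `P(n)² ∣ n`, then either `n` is `exp (L / 2)`-smooth or `n` is
divisible by the square of an integer exceeding `exp (L / 2)`. There are at most `2 x exp (-L / 2)`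
integers `n ≤ x` of the second kind. Those of the first kind are counted by Rankin's trick with
exponent `σ = 1 - L / (2 log x)`, chosen so that `x ^ σ = x exp (-L / 2)`. The Euler product leaves
a factor `exp (O (∑ p ^ (-σ)))` over the primes `p ≤ exp (L / 2)`, and comparing this sum with
`log ζ(1 + 1 / L)` shows that it is `O (L ^ (1 / 2) log L)`, which is negligible against `L`.
-/

open Finset Real

/-- The largest prime factor of `n` (junk value `0` for `n ≤ 1`). -/
def maxPrimeFac (n : ℕ) : ℕ := n.primeFactors.sup _root_.id

section EulerProduct

variable {f : ℕ →* ℝ}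

lemma exp_sum_primesBelow_le_tsum (hf : ∀ n, 0 ≤ f n) (hsum : Summable f) (N : ℕ) :
    exp (∑ p ∈ N.primesBelow, f p) ≤ ∑' n, f n := by
  have hlt {p : ℕ} (hp : p ∈ N.primesBelow) : f p < 1 :=
    (le_norm_self _).trans_lt (hsum.norm_lt_one (Nat.prime_of_mem_primesBelow hp).one_lt)
  calc exp (∑ p ∈ N.primesBelow, f p)
      = ∏ p ∈ N.primesBelow, exp (f p) := exp_sum _ _
    _ ≤ ∏ p ∈ N.primesBelow, (1 - f p)⁻¹ := by
        refine prod_le_prod (fun p _ ↦ (exp_pos _).le) fun p hp ↦ ?_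
        rw [← inv_inv (exp (f p)), ← exp_neg]
        exact inv_anti₀ (sub_pos.2 (hlt hp)) (one_sub_le_exp_neg _)
    _ = ∑' m : N.smoothNumbers, f m :=
        EulerProduct.prod_primesBelow_geometric_eq_tsum_smoothNumbers hsum N
    _ ≤ ∑' n, f n := hsum.tsum_subtype_le f _ hf

lemma inv_one_sub_le_exp_div {c t : ℝ} (ht : 0 ≤ t) (htc : t ≤ c) (hc : c < 1) :
    (1 - t)⁻¹ ≤ exp (t / (1 - c)) := by
  have ht1 : 0 < 1 - t := by linarith
  rw [← exp_log (inv_pos.2 ht1), log_inv, exp_le_exp]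
  calc -log (1 - t) ≤ (1 - t)⁻¹ - 1 := by linarith [one_sub_inv_le_log_of_pos ht1]
    _ = t / (1 - t) := by field_simp; ring
    _ ≤ t / (1 - c) := by gcongr

lemma sum_smoothNumbersUpTo_le_exp (hf : ∀ n, 0 ≤ f n) {c : ℝ} (hc : c < 1)
    (hfc : ∀ p : ℕ, p.Prime → f p ≤ c) (n N : ℕ) :
    ∑ m ∈ Nat.smoothNumbersUpTo n N, f m ≤ exp ((∑ p ∈ N.primesBelow, f p) / (1 - c)) := by
  have hnorm {p : ℕ} (hp : p.Prime) : ‖f p‖ < 1 := by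
    rw [norm_of_nonneg (hf p)]
    exact (hfc p hp).trans_lt hc
  have hsmooth : ∀ m ∈ Nat.smoothNumbersUpTo n N, m ∈ N.smoothNumbers :=
    fun m hm ↦ (Nat.mem_smoothNumbersUpTo.1 hm).2
  calc ∑ m ∈ Nat.smoothNumbersUpTo n N, f m
      = ∑ m ∈ (Nat.smoothNumbersUpTo n N).subtype (· ∈ N.smoothNumbers), f m :=
        (sum_subtype_of_mem f hsmooth).symm
    _ ≤ ∏ p ∈ N.primesBelow, (1 - f p)⁻¹ :=
        sum_le_hasSum _ (fun m _ ↦ hf m)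
          (EulerProduct.summable_and_hasSum_smoothNumbers_prod_primesBelow_geometric hnorm N).2
    _ ≤ ∏ p ∈ N.primesBelow, exp (f p / (1 - c)) := by
        refine prod_le_prod (fun p hp ↦ ?_) fun p hp ↦ ?_ <;>
          have hpc := hfc p (Nat.prime_of_mem_primesBelow hp)
        · exact inv_nonneg.2 (by linarith)
        · exact inv_one_sub_le_exp_div (hf p) hpc hc
    _ = exp ((∑ p ∈ N.primesBelow, f p) / (1 - c)) := by rw [sum_div, exp_sum]

end EulerProduct

section PowerSums

/-- The completely multiplicative function `n ↦ n ^ r`, to which the Euler product applies. -/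
noncomputable def natRpowHom (r : ℝ) : ℕ →* ℝ where
  toFun n := (n : ℝ) ^ r
  map_one' := by simp
  map_mul' m n := by
    push_cast
    exact mul_rpow m.cast_nonneg n.cast_nonneg

lemma natRpowHom_nonneg (r : ℝ) (n : ℕ) : 0 ≤ natRpowHom r n :=
  rpow_nonneg n.cast_nonneg r

lemma tsum_nat_rpow_neg_le {s : ℝ} (hs : 1 < s) :
    ∑' n : ℕ, (n : ℝ) ^ (-s) ≤ s / (s - 1) := by
  have hs1 : s - 1 ≠ 0 := by linarith
  have hterm : 0 ≤ ZetaAsymptotics.termTSum s :=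
    tsum_nonneg fun n ↦ ZetaAsymptotics.term_nonneg (n + 1) s
  calc ∑' n : ℕ, (n : ℝ) ^ (-s)
      = ∑' n : ℕ, 1 / (n + 1 : ℝ) ^ s := by
        rw [(summable_nat_rpow.2 (by linarith)).tsum_eq_zero_add]
        simp [zero_rpow (by linarith : -s ≠ 0), rpow_neg (Nat.cast_add_one_pos _).le]
    _ = 1 + 1 / (s - 1) - s * ZetaAsymptotics.termTSum s := by
        linarith [ZetaAsymptotics.zeta_limit_aux1 hs]
    _ ≤ 1 + 1 / (s - 1) := sub_le_self _ (mul_nonneg (by linarith) hterm)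
    _ = s / (s - 1) := by field_simp; ring

lemma sum_primesBelow_rpow_neg_le_log {s : ℝ} (hs : 1 < s) (N : ℕ) :
    ∑ p ∈ N.primesBelow, (p : ℝ) ^ (-s) ≤ log (s / (s - 1)) := by
  have hexp := exp_sum_primesBelow_le_tsum (natRpowHom_nonneg (-s))
    (summable_nat_rpow.2 (by linarith)) N
  rw [le_log_iff_exp_le (div_pos (by linarith) (by linarith))]
  exact hexp.trans (tsum_nat_rpow_neg_le hs)

lemma sum_primesBelow_rpow_neg_le {σ s y : ℝ} (hs : 1 < s) (hσs : σ ≤ s) (hy : 0 ≤ y) :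
    ∑ p ∈ (⌊y⌋₊ + 1).primesBelow, (p : ℝ) ^ (-σ) ≤ y ^ (s - σ) * log (s / (s - 1)) := by
  calc ∑ p ∈ (⌊y⌋₊ + 1).primesBelow, (p : ℝ) ^ (-σ)
      ≤ ∑ p ∈ (⌊y⌋₊ + 1).primesBelow, y ^ (s - σ) * (p : ℝ) ^ (-s) := by
        refine sum_le_sum fun p hp ↦ ?_
        obtain ⟨hpN, hprime⟩ := Nat.mem_primesBelow.1 hp
        have hp0 : (0 : ℝ) < p := Nat.cast_pos.2 hprime.pos
        have hpy : (p : ℝ) ≤ y := (Nat.le_floor_iff hy).1 (Nat.lt_succ_iff.1 hpN)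
        rw [show -σ = (s - σ) + -s by ring, rpow_add hp0]
        gcongr
    _ = y ^ (s - σ) * ∑ p ∈ (⌊y⌋₊ + 1).primesBelow, (p : ℝ) ^ (-s) := (mul_sum ..).symm
    _ ≤ y ^ (s - σ) * log (s / (s - 1)) := by
        gcongr
        exact sum_primesBelow_rpow_neg_le_log hs _

end PowerSums

section Counting

lemma card_smoothNumbersUpTo_le_rpow_mul_exp {σ : ℝ} (hσ : 0 < σ) (n N : ℕ) :
    (#(Nat.smoothNumbersUpTo n N) : ℝ) ≤
      (n : ℝ) ^ σ * exp ((∑ p ∈ N.primesBelow, (p : ℝ) ^ (-σ)) / (1 - 2 ^ (-σ))) := by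
  have hprime (p : ℕ) (hp : p.Prime) : natRpowHom (-σ) p ≤ 2 ^ (-σ) :=
    rpow_le_rpow_of_nonpos two_pos (Nat.ofNat_le_cast.2 hp.two_le) (by linarith)
  have htwo : (2 : ℝ) ^ (-σ) < 1 := rpow_lt_one_of_one_lt_of_neg one_lt_two (by linarith)
  calc (#(Nat.smoothNumbersUpTo n N) : ℝ)
      = ∑ _m ∈ Nat.smoothNumbersUpTo n N, (1 : ℝ) := by simp
    _ ≤ ∑ m ∈ Nat.smoothNumbersUpTo n N, (n : ℝ) ^ σ * (m : ℝ) ^ (-σ) := by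
        refine sum_le_sum fun m hm ↦ ?_
        obtain ⟨hmn, hm⟩ := Nat.mem_smoothNumbersUpTo.1 hm
        have hm0 : (0 : ℝ) < m := Nat.cast_pos.2 (Nat.pos_of_ne_zero hm.1)
        rw [rpow_neg hm0.le, ← div_eq_mul_inv, one_le_div (rpow_pos_of_pos hm0 σ)]
        gcongr
    _ = (n : ℝ) ^ σ * ∑ m ∈ Nat.smoothNumbersUpTo n N, (m : ℝ) ^ (-σ) := (mul_sum ..).symm
    _ ≤ _ := by
        gcongr
        exact sum_smoothNumbersUpTo_le_exp (natRpowHom_nonneg (-σ)) htwo hprime n N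

open Classical in
lemma card_filter_exists_sq_dvd_le (n k : ℕ) :
    (#{m ∈ Ioc 0 n | ∃ d, k < d ∧ d ^ 2 ∣ m} : ℝ) ≤ n * (2 / (k + 1)) := by
  have hsub : {m ∈ Ioc 0 n | ∃ d, k < d ∧ d ^ 2 ∣ m} ⊆
      (Ioo k (n + 1)).biUnion fun d ↦ {m ∈ Ioc 0 n | d ^ 2 ∣ m} := by
    intro m hm
    obtain ⟨hmn, d, hkd, hdm⟩ := mem_filter.1 hm
    obtain ⟨hm0, hmn'⟩ := mem_Ioc.1 hmn
    have hdn : d ≤ n := (Nat.le_of_dvd hm0 ((dvd_pow_self d two_ne_zero).trans hdm)).trans hmn'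
    exact mem_biUnion.2
      ⟨d, mem_Ioo.2 ⟨hkd, Nat.lt_succ_of_le hdn⟩, mem_filter.2 ⟨hmn, hdm⟩⟩
  calc (#{m ∈ Ioc 0 n | ∃ d, k < d ∧ d ^ 2 ∣ m} : ℝ)
      ≤ ∑ d ∈ Ioo k (n + 1), (#{m ∈ Ioc 0 n | d ^ 2 ∣ m} : ℝ) := by
        exact_mod_cast (card_le_card hsub).trans card_biUnion_le
    _ ≤ ∑ d ∈ Ioo k (n + 1), (n : ℝ) * ((d : ℝ) ^ 2)⁻¹ := by
        refine sum_le_sum fun d _ ↦ ?_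
        rw [Nat.Ioc_filter_dvd_card_eq_div, ← div_eq_mul_inv]
        exact_mod_cast Nat.cast_div_le (α := ℝ) (m := n) (n := d ^ 2)
    _ = n * ∑ d ∈ Ioo k (n + 1), ((d : ℝ) ^ 2)⁻¹ := (mul_sum ..).symm
    _ ≤ n * (2 / (k + 1)) := by
        gcongr
        exact sum_Ioo_inv_sq_le k (n + 1)

end Counting

/-- The integers `2 ≤ m ≤ n` whose largest prime factor repeats, the set counted by the theorem. -/
def repeatedMaxPrimeFacUpTo (n : ℕ) : Finset ℕ := {m ∈ Icc 2 n | maxPrimeFac m ^ 2 ∣ m}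

section Splitting

open Classical in
lemma repeatedMaxPrimeFacUpTo_subset_union (n k : ℕ) :
    repeatedMaxPrimeFacUpTo n ⊆
      Nat.smoothNumbersUpTo n (k + 1) ∪ {m ∈ Ioc 0 n | ∃ d, k < d ∧ d ^ 2 ∣ m} := by
  intro m hm
  obtain ⟨hm, hdvd⟩ := mem_filter.1 hm
  obtain ⟨hm2, hmn⟩ := mem_Icc.1 hm
  rw [mem_union]
  rcases le_or_gt (maxPrimeFac m) k with hk | hk
  · refine .inl (Nat.mem_smoothNumbersUpTo.2 ⟨hmn, Nat.mem_smoothNumbers'.2 fun p hp hpm ↦ ?_⟩)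
    have hple : p ≤ maxPrimeFac m :=
      le_sup (f := _root_.id) (Nat.mem_primeFactors.2 ⟨hp, hpm, by omega⟩)
    omega
  · exact .inr (mem_filter.2 ⟨mem_Ioc.2 ⟨by omega, hmn⟩, maxPrimeFac m, hk, hdvd⟩)

lemma card_repeatedMaxPrimeFacUpTo_le_add {x σ s y : ℝ} (hx : 0 ≤ x) (hσ : 0 < σ) (hs : 1 < s)
    (hσs : σ ≤ s) (hy : 0 < y) :
    (#(repeatedMaxPrimeFacUpTo ⌊x⌋₊) : ℝ) ≤
      x ^ σ * exp (y ^ (s - σ) * log (s / (s - 1)) / (1 - 2 ^ (-σ))) + x * (2 / y) := by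
  classical
  have htwo : (2 : ℝ) ^ (-σ) < 1 := rpow_lt_one_of_one_lt_of_neg one_lt_two (by linarith)
  have hfloor : (⌊x⌋₊ : ℝ) ≤ x := Nat.floor_le hx
  have hcard : (#(repeatedMaxPrimeFacUpTo ⌊x⌋₊) : ℝ) ≤
      #(Nat.smoothNumbersUpTo ⌊x⌋₊ (⌊y⌋₊ + 1)) +
        #{m ∈ Ioc 0 ⌊x⌋₊ | ∃ d, ⌊y⌋₊ < d ∧ d ^ 2 ∣ m} := by
    exact_mod_cast (card_le_card (repeatedMaxPrimeFacUpTo_subset_union ⌊x⌋₊ ⌊y⌋₊)).trans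
      (card_union_le ..)
  refine hcard.trans (add_le_add ?_ ?_)
  · refine (card_smoothNumbersUpTo_le_rpow_mul_exp hσ _ _).trans ?_
    gcongr
    exact sum_primesBelow_rpow_neg_le hs hσs hy.le
  · refine (card_filter_exists_sq_dvd_le _ _).trans ?_
    gcongr
    exact (Nat.lt_floor_add_one y).le

end Splitting

section Elementary

lemma log_one_add_le_rpow_div {a z : ℝ} (ha : 0 < a) (ha1 : a ≤ 1) (hz : 0 ≤ z) :
    log (1 + z) ≤ z ^ a / a := by
  have hz1 : 0 < 1 + z := by linarith
  rw [le_div_iff₀' ha, ← log_rpow hz1]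
  calc log ((1 + z) ^ a) ≤ (1 + z) ^ a - 1 := log_le_sub_one_of_pos (rpow_pos_of_pos hz1 a)
    _ ≤ 1 ^ a + z ^ a - 1 := by gcongr; exact rpow_add_le_add_rpow zero_le_one hz ha.le ha1
    _ = z ^ a := by rw [one_rpow, add_sub_cancel_left]

lemma mul_rpow_le_mul_add {a ε K z : ℝ} (ha : 0 ≤ a) (ha1 : a < 1) (hε : 0 < ε) (hK : 0 ≤ K)
    (hz : 0 < z) : K * z ^ a ≤ ε * z + K * (K / ε) ^ (a / (1 - a)) := by
  have ha' : 0 < 1 - a := sub_pos.2 ha1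
  rcases le_total (K / ε) (z ^ (1 - a)) with h | h
  · rw [div_le_iff₀' hε] at h
    calc K * z ^ a ≤ ε * z ^ (1 - a) * z ^ a := by gcongr
      _ = ε * z := by rw [mul_assoc, ← rpow_add hz, sub_add_cancel, rpow_one]
      _ ≤ ε * z + K * (K / ε) ^ (a / (1 - a)) := le_add_of_nonneg_right (by positivity)
  · calc K * z ^ a = K * (z ^ (1 - a)) ^ (a / (1 - a)) := by
          rw [← rpow_mul hz.le, mul_div_cancel₀ _ ha'.ne']
      _ ≤ K * (K / ε) ^ (a / (1 - a)) := by gcongr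
      _ ≤ ε * z + K * (K / ε) ^ (a / (1 - a)) := le_add_of_nonneg_left (by positivity)

lemma two_rpow_neg_le_three_quarters {σ : ℝ} (hσ : 1 / 2 ≤ σ) : (2 : ℝ) ^ (-σ) ≤ 3 / 4 := by
  calc (2 : ℝ) ^ (-σ) ≤ 2 ^ (-(1 / 2) : ℝ) := by gcongr; exact one_le_two
    _ = (√2)⁻¹ := by rw [rpow_neg two_pos.le, ← sqrt_eq_rpow]
    _ ≤ (4 / 3)⁻¹ := by gcongr; exact le_sqrt_of_sq_le (by norm_num)
    _ = 3 / 4 := by norm_num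

lemma exp_one_half_le_two : exp (1 / 2) ≤ 2 := by
  rw [exp_half, sqrt_le_left two_pos.le]
  linarith [exp_one_lt_three]

lemma exp_exp_one_le_sixteen : exp (exp 1) ≤ 16 := by
  have hlog : log 16 = 4 * log 2 := by
    rw [show (16 : ℝ) = 2 ^ 4 by norm_num, log_pow, Nat.cast_ofNat]
  rw [← le_log_iff_exp_le (by norm_num), hlog]
  linarith [log_two_gt_d9, exp_one_lt_d9]

end Elementary

/-- The quantity `√(log x · log log x)`, in terms of which the saving over the trivial bound `x` is
expressed. -/
noncomputable def sqrtLogMulLogLog (x : ℝ) : ℝ := √(log x * log (log x))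

/-- The exponent `σ` in Rankin's trick, for which `x ^ σ = x * exp (-√(log x · log log x) / 2)`. -/
noncomputable def rankinExponent (x : ℝ) : ℝ := 1 - sqrtLogMulLogLog x / (2 * log x)

section Parameters

variable {x : ℝ}

lemma exp_one_le_log (hx : exp (exp 1) ≤ x) : exp 1 ≤ log x :=
  (le_log_iff_exp_le ((exp_pos _).trans_le hx)).2 hx

lemma log_pos_of_exp_exp_one_le (hx : exp (exp 1) ≤ x) : 0 < log x :=
  (exp_pos 1).trans_le (exp_one_le_log hx)

lemma one_le_log_log (hx : exp (exp 1) ≤ x) : 1 ≤ log (log x) :=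
  (le_log_iff_exp_le (log_pos_of_exp_exp_one_le hx)).2 (exp_one_le_log hx)

lemma sqrtLogMulLogLog_sq (hx : exp (exp 1) ≤ x) :
    sqrtLogMulLogLog x ^ 2 = log x * log (log x) :=
  sq_sqrt (mul_nonneg (log_pos_of_exp_exp_one_le hx).le (zero_le_one.trans (one_le_log_log hx)))

lemma log_le_sqrtLogMulLogLog_sq (hx : exp (exp 1) ≤ x) : log x ≤ sqrtLogMulLogLog x ^ 2 := by
  rw [sqrtLogMulLogLog_sq hx]
  exact le_mul_of_one_le_right (log_pos_of_exp_exp_one_le hx).le (one_le_log_log hx)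

lemma sqrtLogMulLogLog_pos (hx : exp (exp 1) ≤ x) : 0 < sqrtLogMulLogLog x :=
  sqrt_pos.2 (mul_pos (log_pos_of_exp_exp_one_le hx) (zero_lt_one.trans_le (one_le_log_log hx)))

lemma sqrtLogMulLogLog_le_log (hx : exp (exp 1) ≤ x) : sqrtLogMulLogLog x ≤ log x := by
  have ht := (log_pos_of_exp_exp_one_le hx).le
  rw [sqrtLogMulLogLog, sqrt_le_left ht, sq]
  exact mul_le_mul_of_nonneg_left (log_le_self ht) ht

lemma one_half_le_rankinExponent (hx : exp (exp 1) ≤ x) : 1 / 2 ≤ rankinExponent x := by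
  have ht := log_pos_of_exp_exp_one_le hx
  have hdiv : sqrtLogMulLogLog x / (2 * log x) ≤ 1 / 2 := by
    rw [div_le_iff₀ (by positivity)]
    linarith [sqrtLogMulLogLog_le_log hx]
  rw [rankinExponent]
  linarith

lemma rankinExponent_le_one (hx : exp (exp 1) ≤ x) : rankinExponent x ≤ 1 :=
  sub_le_self _ (div_nonneg (sqrt_nonneg _) (by linarith [log_pos_of_exp_exp_one_le hx]))

lemma rpow_rankinExponent (hx : exp (exp 1) ≤ x) :
    x ^ rankinExponent x = x * exp (-(sqrtLogMulLogLog x / 2)) := by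
  have hx0 : 0 < x := (exp_pos _).trans_le hx
  have ht := (log_pos_of_exp_exp_one_le hx).ne'
  rw [rankinExponent, sub_eq_add_neg, rpow_add hx0, rpow_one, rpow_def_of_pos hx0]
  congr 2
  field_simp

lemma exp_rpow_sub_rankinExponent_le (hx : exp (exp 1) ≤ x) :
    exp (sqrtLogMulLogLog x / 2) ^ (1 + 1 / sqrtLogMulLogLog x - rankinExponent x) ≤
      2 * sqrtLogMulLogLog x ^ (1 / 2 : ℝ) := by
  have ht := log_pos_of_exp_exp_one_le hx
  have hL := sqrtLogMulLogLog_pos hx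
  calc exp (sqrtLogMulLogLog x / 2) ^ (1 + 1 / sqrtLogMulLogLog x - rankinExponent x)
      = exp (1 / 2 + log (log x) / 4) := by
        rw [← exp_mul, rankinExponent]
        congr 1
        field_simp
        linear_combination 4 * sqrtLogMulLogLog_sq hx
    _ = exp (1 / 2) * log x ^ (1 / 4 : ℝ) := by
        rw [exp_add, rpow_def_of_pos ht, div_eq_mul_one_div (log (log x))]
    _ ≤ 2 * (sqrtLogMulLogLog x ^ 2) ^ (1 / 4 : ℝ) := by
        gcongr
        exacts [exp_one_half_le_two, log_le_sqrtLogMulLogLog_sq hx]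
    _ = 2 * sqrtLogMulLogLog x ^ (1 / 2 : ℝ) := by
        rw [← rpow_natCast_mul hL.le]
        norm_num

lemma rankin_error_le (hx : exp (exp 1) ≤ x) :
    exp (sqrtLogMulLogLog x / 2) ^ (1 + 1 / sqrtLogMulLogLog x - rankinExponent x) *
        log ((1 + 1 / sqrtLogMulLogLog x) / (1 + 1 / sqrtLogMulLogLog x - 1)) /
        (1 - 2 ^ (-rankinExponent x)) ≤
      32 * sqrtLogMulLogLog x ^ (3 / 4 : ℝ) := by
  have hpow := exp_rpow_sub_rankinExponent_le hx
  have htwo := two_rpow_neg_le_three_quarters (one_half_le_rankinExponent hx)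
  have hL := sqrtLogMulLogLog_pos hx
  set L := sqrtLogMulLogLog x
  have hratio : (1 + 1 / L) / (1 + 1 / L - 1) = 1 + L := by
    field_simp
    ring
  have hlog : log (1 + L) ≤ L ^ (1 / 4 : ℝ) / (1 / 4) :=
    log_one_add_le_rpow_div (by norm_num) (by norm_num) hL.le
  have hlog_nonneg : 0 ≤ log (1 + L) := log_nonneg (by linarith)
  rw [hratio]
  calc exp (L / 2) ^ (1 + 1 / L - rankinExponent x) * log (1 + L) / (1 - 2 ^ (-rankinExponent x))
      ≤ 2 * L ^ (1 / 2 : ℝ) * (L ^ (1 / 4 : ℝ) / (1 / 4)) / (1 / 4) := by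
        gcongr
        linarith
    _ = 32 * (L ^ (1 / 2 : ℝ) * L ^ (1 / 4 : ℝ)) := by ring
    _ = 32 * L ^ (3 / 4 : ℝ) := by rw [← rpow_add hL]; norm_num

end Parameters

theorem card_repeatedMaxPrimeFacUpTo_le {x : ℝ} (hx : exp (exp 1) ≤ x) :
    (#(repeatedMaxPrimeFacUpTo ⌊x⌋₊) : ℝ) ≤
      3 * x * exp (-(sqrtLogMulLogLog x / 2) + 32 * sqrtLogMulLogLog x ^ (3 / 4 : ℝ)) := by
  have hx0 : 0 < x := (exp_pos _).trans_le hx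
  have hL := sqrtLogMulLogLog_pos hx
  have hσ := one_half_le_rankinExponent hx
  have hs : 1 < 1 + 1 / sqrtLogMulLogLog x := lt_add_of_pos_right _ (by positivity)
  have hsplit := card_repeatedMaxPrimeFacUpTo_le_add hx0.le (by linarith) hs
    ((rankinExponent_le_one hx).trans hs.le) (exp_pos (sqrtLogMulLogLog x / 2))
  have herror := rankin_error_le hx
  rw [rpow_rankinExponent hx] at hsplit
  set L := sqrtLogMulLogLog x
  set E := 32 * L ^ (3 / 4 : ℝ)
  have hE : 1 ≤ exp E := one_le_exp (by positivity)
  calc (#(repeatedMaxPrimeFacUpTo ⌊x⌋₊) : ℝ)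
      ≤ x * exp (-(L / 2)) * exp E + x * (2 / exp (L / 2)) := hsplit.trans (by gcongr)
    _ = x * exp (-(L / 2)) * (exp E + 2 * 1) := by rw [exp_neg]; ring
    _ ≤ x * exp (-(L / 2)) * (exp E + 2 * exp E) := by gcongr
    _ = 3 * x * exp (-(L / 2) + E) := by rw [exp_add]; ring

/-- For every `ε > 0` there is `C > 0` such that for all `x ≥ 16`, the number of
`2 ≤ n ≤ x` whose largest prime factor repeats (`P(n)² ∣ n`) is at most
`C x exp(−(1/2 − ε)√(log x · log log x))`. -/
theorem count_repeated_largest_prime_factor :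
    ∀ ε > (0 : ℝ), ∃ C > (0 : ℝ), ∀ x : ℝ, 16 ≤ x →
      (((Finset.Icc 2 ⌊x⌋₊).filter (fun n => (maxPrimeFac n) ^ 2 ∣ n)).card : ℝ)
        ≤ C * x * Real.exp (-(1/2 - ε) * Real.sqrt (Real.log x * Real.log (Real.log x))) := by
  intro ε hε
  set A : ℝ := 32 * (32 / ε) ^ (3 / 4 / (1 - 3 / 4) : ℝ)
  refine ⟨3 * exp A, by positivity, fun x hx ↦ ?_⟩
  have hxe : exp (exp 1) ≤ x := exp_exp_one_le_sixteen.trans hx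
  have hsub : 32 * sqrtLogMulLogLog x ^ (3 / 4 : ℝ) ≤ ε * sqrtLogMulLogLog x + A :=
    mul_rpow_le_mul_add (by norm_num) (by norm_num) hε (by norm_num) (sqrtLogMulLogLog_pos hxe)
  calc (#(repeatedMaxPrimeFacUpTo ⌊x⌋₊) : ℝ)
      ≤ 3 * x * exp (-(sqrtLogMulLogLog x / 2) + 32 * sqrtLogMulLogLog x ^ (3 / 4 : ℝ)) :=
        card_repeatedMaxPrimeFacUpTo_le hxe
    _ ≤ 3 * x * exp (-(sqrtLogMulLogLog x / 2) + (ε * sqrtLogMulLogLog x + A)) := by gcongr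
    _ = 3 * exp A * x * exp (-(1 / 2 - ε) * sqrtLogMulLogLog x) := by
        rw [mul_right_comm 3 (exp A) x, mul_assoc (3 * x), ← exp_add]
        ring_nf
end
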